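/- arXiv:1309.0908 — 12 statements merged into one kernel-verified Lean document; each statement's English description precedes it below -/
import Mathlib

section
/- Let p be a prime and let 𝐬 = (s₁,…,s_k) be a composition. Then in the field ℚ_p of p-adic numbers, the family indexed by tuples (r₁,…,r_k) ∈ ℕ^k whose (r₁,…,r_k)-term is (∏_{j=1}^{k} C(s_j + r_j − 1, r_j)) · p^{r₁+⋯+r_k} · H_{p−1}(s_k + r_k, …, s₁ + r₁) is summable, and its sum equals (−1)^{s₁+⋯+s_k} · H_{p−1}(s₁,…,s_k). -/
/-- The multiple harmonic sum `H_n(s₁,…,s_k) = ∑_{n ≥ n₁ > … > n_k ≥ 1} 1/(n₁^{s₁} ⋯ n_k^{s_k})`,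
with `H_n(∅) = 1`. -/
def MHS : ℕ → List ℕ → ℚ
  | _, [] => 1
  | n, s :: t => ∑ m ∈ Finset.Icc 1 n, (1 / (m : ℚ) ^ s) * MHS (m - 1) t

/-- Doubly truncated sums. -/
noncomputable def AHS (p : ℕ) [Fact p.Prime] : ℕ → ℕ → List ℕ → ℚ_[p]
  | _, _, [] => 1
  | lo, hi, s :: t => ∑ m ∈ Finset.Ioo lo hi, (1 / (m : ℚ_[p]) ^ s) * AHS p lo m t

theorem AHS_MHS (p : ℕ) [Fact p.Prime] (s : List ℕ) (n : ℕ) (hn : 0 < n) :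
    ((MHS (n - 1) s : ℚ) : ℚ_[p]) = AHS p 0 n s := by
  induction s generalizing n with
  | nil => simp [MHS, AHS]
  | cons a t ih =>
    simp only [MHS, AHS]
    push_cast
    have : Finset.Icc 1 (n - 1) = Finset.Ioo 0 n := by
      ext x; simp only [Finset.mem_Icc, Finset.mem_Ioo]; omega
    rw [this]
    refine Finset.sum_congr rfl fun m hm => ?_
    rw [ih m (Finset.mem_Ioo.1 hm).1]

theorem AHS_append (p : ℕ) [Fact p.Prime] (a : ℕ) (t : List ℕ) (lo hi : ℕ) :
    AHS p lo hi (t ++ [a]) =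
      ∑ m ∈ Finset.Ioo lo hi, (1 / (m : ℚ_[p]) ^ a) * AHS p m hi t := by
  induction t generalizing hi with
  | nil => simp [AHS]
  | cons u t ih =>
    simp only [List.cons_append, AHS, ih, Finset.mul_sum]
    rw [Finset.sum_comm' (t' := Finset.Ioo lo hi) (s' := fun m => Finset.Ioo m hi)]
    · refine Finset.sum_congr rfl fun m _ => Finset.sum_congr rfl fun n _ => ?_
      ring
    · intro x y
      simp only [Finset.mem_Ioo]; omega

theorem geom_aux (p : ℕ) [hp : Fact p.Prime] (a : ℕ) (ha : 0 < a) (m : ℕ) (h0 : 0 < m)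
    (hm : m < p) :
    HasSum (fun r : ℕ => ((a + r - 1).choose r : ℚ_[p]) * (p : ℚ_[p]) ^ r *
      (1 / (m : ℚ_[p]) ^ (a + r))) ((-1) ^ a * (1 / ((p - m : ℕ) : ℚ_[p]) ^ a)) := by
  obtain ⟨k, rfl⟩ : ∃ k, a = k + 1 := ⟨a - 1, by omega⟩
  have hm0 : (m : ℚ_[p]) ≠ 0 := by exact_mod_cast h0.ne'
  have hpm : ((p - m : ℕ) : ℚ_[p]) ≠ 0 := by
    have : p - m ≠ 0 := by omega
    exact_mod_cast this
  have hnm : ‖(m : ℚ_[p])‖ = 1 := by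
    rw [Padic.norm_natCast_eq_one_iff]
    exact (Nat.Prime.coprime_iff_not_dvd hp.out).2 (Nat.not_dvd_of_pos_of_lt h0 hm)
  have hx : ‖(p : ℚ_[p]) / m‖ < 1 := by
    rw [norm_div, hnm, div_one]
    exact Padic.norm_p_lt_one
  have h := (hasSum_choose_mul_geometric_of_norm_lt_one k hx).mul_right (1 / (m : ℚ_[p]) ^ (k + 1))
  convert! h using 1
  · funext r
    have : k + 1 + r - 1 = r + k := by omega
    rw [this, Nat.choose_symm_add, div_pow, pow_add]
    field_simp
  · have e : (1 : ℚ_[p]) - p / m = (-1) * ((p - m : ℕ) : ℚ_[p]) / m := by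
      rw [Nat.cast_sub hm.le]; field_simp; ring
    rw [e, div_pow, mul_pow]
    have : ((-1 : ℚ_[p]) ^ (k + 1)) * (-1) ^ (k + 1) = 1 := by
      rw [← mul_pow]; simp
    field_simp
    linear_combination this

theorem mul_aux (p : ℕ) [Fact p.Prime] {α β : Type} (f : α → ℚ_[p]) (g : β → ℚ_[p])
    (a b : ℚ_[p]) (hf : HasSum f a) (hg : HasSum g b) :
    HasSum (fun x : α × β => f x.1 * g x.2) (a * b) := by
  have : NonarchimedeanRing ℚ_[p] :=
    { is_nonarchimedean := NonarchimedeanAddGroup.is_nonarchimedean }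
  exact hf.mul_of_nonarchimedean hg

theorem AHS_main (p : ℕ) [Fact p.Prime] (s : List ℕ) (hs : ∀ i ∈ s, 0 < i) (lo : ℕ)
    (hlo : lo < p) :
    HasSum
      (fun r : Fin s.length → ℕ =>
        ((∏ j : Fin s.length, ((s.get j + r j - 1).choose (r j)) : ℕ) : ℚ_[p]) *
          (p : ℚ_[p]) ^ (∑ j : Fin s.length, r j) *
          AHS p lo p ((List.ofFn fun j : Fin s.length => s.get j + r j).reverse))
      ((-1) ^ s.sum * AHS p 0 (p - lo) s) := by
  induction s generalizing lo with
  | nil =>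
    simp [AHS]
  | cons a t ih =>
    have ha : 0 < a := hs a (by simp)
    have ih' := fun m (hm : m < p) => ih (fun i hi => hs i (by simp [hi])) m hm
    refine (Equiv.hasSum_iff (Fin.consEquiv (fun _ : Fin (t.length + 1) => ℕ))).1 ?_
    have key : HasSum (fun x : ℕ × (Fin t.length → ℕ) => ∑ m ∈ Finset.Ioo lo p,
        (((a + x.1 - 1).choose x.1 : ℚ_[p]) * (p : ℚ_[p]) ^ x.1 *
          (1 / (m : ℚ_[p]) ^ (a + x.1))) * 
        (((∏ j : Fin t.length, ((t.get j + x.2 j - 1).choose (x.2 j)) : ℕ) : ℚ_[p]) *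
          (p : ℚ_[p]) ^ (∑ j : Fin t.length, x.2 j) *
          AHS p m p ((List.ofFn fun j : Fin t.length => t.get j + x.2 j).reverse)))
        (∑ m ∈ Finset.Ioo lo p, ((-1) ^ a * (1 / ((p - m : ℕ) : ℚ_[p]) ^ a)) *
          ((-1) ^ t.sum * AHS p 0 (p - m) t)) := by
      refine hasSum_sum fun m hm => ?_
      rw [Finset.mem_Ioo] at hm
      have hm0 : 0 < m := by omega
      have hh := mul_aux p _ _ _ _ (geom_aux p a ha m hm0 hm.2) (ih' m hm.2)
      exact hh
    convert! key using 1
    · funext x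
      obtain ⟨r0, r⟩ := x
      simp only [Function.comp, Fin.consEquiv_apply]
      have e1 := Fin.prod_univ_succ (fun j : Fin (t.length + 1) =>
        (((a :: t).get j + (Fin.cons r0 r : Fin (t.length + 1) → ℕ) j - 1).choose
          ((Fin.cons r0 r : Fin (t.length + 1) → ℕ) j)))
      have e2 := Fin.sum_univ_succ (Fin.cons r0 r : Fin (t.length + 1) → ℕ)
      have e3 := List.ofFn_succ (f := fun j : Fin (t.length + 1) =>
        (a :: t).get j + (Fin.cons r0 r : Fin (t.length + 1) → ℕ) j)
      simp only [Fin.cons_zero, Fin.cons_succ] at e1 e2 e3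
      erw [e1, e2, e3]
      rw [List.reverse_cons, AHS_append, Finset.mul_sum]
      refine Finset.sum_congr rfl fun m _ => ?_
      simp only [List.get_cons_zero, List.get_cons_succ', Nat.cast_mul, pow_add]
      ring
    · simp only [AHS, List.sum_cons, Finset.mul_sum]
      symm
      refine Finset.sum_nbij' (fun m => p - m) (fun m => p - m) ?_ ?_ ?_ ?_ ?_
      · intro m; simp only [Finset.mem_Ioo]; omega
      · intro m; simp only [Finset.mem_Ioo]; omega
      · intro m; simp only [Finset.mem_Ioo]; omega
      · intro m; simp only [Finset.mem_Ioo]; omega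
      · intro m _
        rw [pow_add]; ring

/-- **Asymptotic Reversal Theorem.** Let `p` be a prime and `s = (s₁,…,s_k)` a composition.
In `ℚ_p`, the family indexed by tuples `(r₁,…,r_k) ∈ ℕ^k` whose term is
`(∏_j C(s_j + r_j − 1, r_j)) p^{r₁+⋯+r_k} H_{p−1}(s_k + r_k, …, s₁ + r₁)` is summable, with sum
`(−1)^{s₁+⋯+s_k} H_{p−1}(s₁,…,s_k)`. -/
theorem asymptotic_reversal (p : ℕ) [Fact p.Prime] (s : List ℕ) (hs : ∀ i ∈ s, 0 < i) :
    HasSum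
      (fun r : Fin s.length → ℕ =>
        ((∏ j : Fin s.length, ((s.get j + r j - 1).choose (r j)) : ℕ) : ℚ_[p]) *
          (p : ℚ_[p]) ^ (∑ j : Fin s.length, r j) *
          ((MHS (p - 1) ((List.ofFn fun j : Fin s.length => s.get j + r j).reverse) : ℚ) : ℚ_[p]))
      ((-1) ^ s.sum * ((MHS (p - 1) s : ℚ) : ℚ_[p])) := by
  have hp : 0 < p := (Fact.out : p.Prime).pos
  simp only [AHS_MHS p _ p hp]
  exact AHS_main p s hs 0 hp
end

section
/- For every prime p and every composition 𝐬 = (s₁,…,s_k), the congruence H_{p−1}(s₁,…,s_k) ≡ (−1)^{s₁+⋯+s_k} H_{p−1}(s_k,…,s₁) (mod p) holds; that is, the p-adic valuation of H_{p−1}(s₁,…,s_k) − (−1)^{s₁+⋯+s_k} H_{p−1}(s_k,…,s₁) is at least 1. -/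
def MS (K : Type) [Field K] (a : ℕ) : ℕ → List ℕ → K
  | _, [] => 1
  | b, s :: t => ∑ m ∈ Finset.Ioo a b, ((m : K) ^ s)⁻¹ * MS K a m t

lemma MS_snoc (K : Type) [Field K] (s : ℕ) (t : List ℕ) : ∀ a b : ℕ,
    MS K a b (t ++ [s]) = ∑ m ∈ Finset.Ioo a b, ((m : K) ^ s)⁻¹ * MS K m b t := by
  induction t with
  | nil => intro a b; simp [MS]
  | cons u t ih =>
    intro a b
    simp only [List.cons_append, MS, ih, Finset.mul_sum]
    rw [Finset.sum_comm' (t' := Finset.Ioo a b) (s' := fun l => Finset.Ioo l b)]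
    · refine Finset.sum_congr rfl fun l _ => Finset.sum_congr rfl fun m _ => by ring
    · intro x y; simp only [Finset.mem_Ioo]; omega

lemma MS_refl (p : ℕ) [Fact p.Prime] (t : List ℕ) : ∀ a b : ℕ, a ≤ p → b ≤ p →
    MS (ZMod p) a b t = (-1) ^ t.sum * MS (ZMod p) (p - b) (p - a) t.reverse := by
  induction t with
  | nil => intro a b _ _; simp [MS]
  | cons s t ih =>
    intro a b ha hb
    simp only [List.reverse_cons, MS_snoc, MS, Finset.mul_sum, List.sum_cons]
    refine Finset.sum_bij' (fun m _ => p - m) (fun m _ => p - m) ?_ ?_ ?_ ?_ ?_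
    · intro m hm; simp only [Finset.mem_Ioo] at *; omega
    · intro m hm; simp only [Finset.mem_Ioo] at *; omega
    · intro m hm; simp only [Finset.mem_Ioo] at *; omega
    · intro m hm; simp only [Finset.mem_Ioo] at *; omega
    · intro m hm
      simp only [Finset.mem_Ioo] at hm
      rw [ih a m ha (by omega), Nat.cast_sub (by omega)]
      have h1 : ((-1 : ZMod p) ^ s)⁻¹ = (-1) ^ s := by
        rw [← inv_pow, inv_neg, inv_one]
      have h2 : ((-1 : ZMod p) ^ s) * (-1) ^ s = 1 := by
        rw [← mul_pow]; simp
      have h3 : ((p : ZMod p) - m) = (-1) * m := by simp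
      rw [h3, mul_pow, mul_inv, h1, pow_add]
      linear_combination (-((m : ZMod p) ^ s)⁻¹ * (-1) ^ t.sum
        * MS (ZMod p) (p - m) (p - a) t.reverse) * h2

def RR (p : ℕ) [Fact p.Prime] (q : ℚ) (z : ZMod p) : Prop :=
  ∃ x : ℤ_[p], (x : ℚ_[p]) = (q : ℚ_[p]) ∧ PadicInt.toZMod x = z

lemma RR_mul (p : ℕ) [Fact p.Prime] {q r : ℚ} {z w : ZMod p} (h : RR p q z) (k : RR p r w) :
    RR p (q * r) (z * w) := by
  obtain ⟨x, hx, rfl⟩ := h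
  obtain ⟨y, hy, rfl⟩ := k
  exact ⟨x * y, by push_cast; rw [hx, hy], by simp⟩

lemma RR_sum (p : ℕ) [Fact p.Prime] (S : Finset ℕ) (f : ℕ → ℚ) (g : ℕ → ZMod p)
    (h : ∀ i ∈ S, RR p (f i) (g i)) : RR p (∑ i ∈ S, f i) (∑ i ∈ S, g i) := by
  induction S using Finset.cons_induction with
  | empty => exact ⟨0, by simp, by simp⟩
  | cons a S ha ih =>
    rw [Finset.sum_cons, Finset.sum_cons]
    obtain ⟨x, hx, hx'⟩ := ih fun i hi => h i (by simp [hi])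
    obtain ⟨y, hy, hy'⟩ := h a (by simp)
    exact ⟨y + x, by rw [PadicInt.coe_add, hx, hy]; push_cast; rfl, by rw [map_add, hx', hy']⟩

lemma RR_inv (p : ℕ) [Fact p.Prime] (m s : ℕ) (h0 : 0 < m) (hm : m < p) :
    RR p (1 / (m : ℚ) ^ s) (((m : ZMod p) ^ s)⁻¹) := by
  have hu : IsUnit (m : ℤ_[p]) := by
    rw [PadicInt.isUnit_iff]
    have := (PadicInt.norm_natCast_eq_one_iff (p := p) (n := m)).2
      ((Nat.Prime.coprime_iff_not_dvd Fact.out).2 (Nat.not_dvd_of_pos_of_lt h0 hm))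
    exact this
  obtain ⟨y, hy⟩ := (hu.pow s).exists_right_inv
  refine ⟨y, ?_, ?_⟩
  · have := congrArg (fun x : ℤ_[p] => (x : ℚ_[p])) hy
    push_cast at this ⊢
    rw [one_div]
    exact eq_inv_of_mul_eq_one_right this
  · have := congrArg (PadicInt.toZMod (p := p)) hy
    simp only [map_mul, map_pow, map_natCast, map_one] at this
    exact eq_inv_of_mul_eq_one_right this

lemma RR_MHS (p : ℕ) [Fact p.Prime] (t : List ℕ) : ∀ b : ℕ, 0 < b → b ≤ p →
    RR p (MHS (b - 1) t) (MS (ZMod p) 0 b t) := by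
  induction t with
  | nil => intro b _ _; exact ⟨1, by simp [MHS], by simp [MS]⟩
  | cons s t ih =>
    intro b h0 hb
    have : Finset.Ioo 0 b = Finset.Icc 1 (b - 1) := by
      ext x; simp only [Finset.mem_Ioo, Finset.mem_Icc]; omega
    simp only [MHS, MS, this]
    refine RR_sum p _ _ _ fun m hm => ?_
    simp only [Finset.mem_Icc] at hm
    exact RR_mul p (RR_inv p m s (by omega) (by omega)) (ih m (by omega) (by omega))

/-- For every prime `p` and every composition `s = (s₁,…,s_k)` (a list of positive integers),
`H_{p-1}(s₁,…,s_k) ≡ (-1)^{s₁+⋯+s_k} H_{p-1}(s_k,…,s₁) (mod p)`: the `p`-adic valuation of the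
difference is at least `1`. -/
theorem mhs_reversal_mod_p (p : ℕ) [Fact p.Prime] (s : List ℕ) (hs : ∀ i ∈ s, 0 < i) :
    ‖((MHS (p - 1) s - (-1) ^ s.sum * MHS (p - 1) s.reverse : ℚ) : ℚ_[p])‖
      ≤ (p : ℝ) ^ (-1 : ℤ) := by
  have hp : 0 < p := (Fact.out : p.Prime).pos
  obtain ⟨x, hx, hx'⟩ := RR_MHS p s p hp le_rfl
  obtain ⟨y, hy, hy'⟩ := RR_MHS p s.reverse p hp le_rfl
  have h := MS_refl p s 0 p (Nat.zero_le _) le_rfl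
  rw [Nat.sub_self, Nat.sub_zero, ← hx', ← hy'] at h
  have hk : x - (-1) ^ s.sum * y ∈ RingHom.ker (PadicInt.toZMod (p := p)) := by
    rw [RingHom.mem_ker, map_sub, map_mul, map_pow, map_neg, map_one, h, sub_self]
  rw [PadicInt.ker_toZMod, PadicInt.maximalIdeal_eq_span_p, ← pow_one (p : ℤ_[p]),
    ← PadicInt.norm_le_pow_iff_mem_span_pow] at hk
  have e : ((MHS (p - 1) s - (-1) ^ s.sum * MHS (p - 1) s.reverse : ℚ) : ℚ_[p])
      = ((x - (-1) ^ s.sum * y : ℤ_[p]) : ℚ_[p]) := by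
    push_cast
    rw [hx, hy]
  rw [e, ← PadicInt.norm_def]
  simpa using hk
end

section
/- Let p and n be integers with 1 ≤ n ≤ p. Then the following identity holds in ℚ: C(p, n) = (−1)^{n+1} · (p/n) · ∑_{j=0}^{n−1} (−1)^j p^j H_{n−1}({1}^j), where {1}^j denotes the composition consisting of j ones. -/
theorem mhs_succ (m j : ℕ) : MHS (m + 1) (List.replicate (j + 1) 1) =
    MHS m (List.replicate (j + 1) 1) + 1 / ((m : ℚ) + 1) * MHS m (List.replicate j 1) := by
  simp only [List.replicate_succ, MHS]
  rw [Finset.sum_Icc_succ_top (by omega)]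
  simp

theorem mhs_zero (m j : ℕ) (h : m < j) : MHS m (List.replicate j 1) = 0 := by
  induction m generalizing j with
  | zero =>
    obtain ⟨j, rfl⟩ := Nat.exists_eq_succ_of_ne_zero (by omega : j ≠ 0)
    simp [List.replicate_succ, MHS]
  | succ m ih =>
    obtain ⟨j, rfl⟩ := Nat.exists_eq_succ_of_ne_zero (by omega : j ≠ 0)
    rw [Nat.succ_eq_add_one, mhs_succ, ih _ (by omega), ih _ (by omega)]
    simp

theorem mhs_sum_succ (m : ℕ) (x : ℚ) :
    ∑ j ∈ Finset.range (m + 2), (-1) ^ j * x ^ j * MHS (m + 1) (List.replicate j 1) =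
    (1 - x / ((m : ℚ) + 1)) *
      ∑ j ∈ Finset.range (m + 1), (-1) ^ j * x ^ j * MHS m (List.replicate j 1) := by
  have e : ∑ j ∈ Finset.range (m + 2), (-1) ^ j * x ^ j * MHS m (List.replicate j 1) =
      ∑ j ∈ Finset.range (m + 1), (-1) ^ j * x ^ j * MHS m (List.replicate j 1) := by
    rw [Finset.sum_range_succ, mhs_zero m (m + 1) (by omega)]
    simp
  rw [sub_mul, one_mul]
  nth_rewrite 1 [← e]
  rw [Finset.sum_range_succ', Finset.sum_range_succ' _ (m + 1), Finset.mul_sum,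
    add_sub_right_comm, ← Finset.sum_sub_distrib]
  congr 1
  · apply Finset.sum_congr rfl
    intro j _
    rw [mhs_succ]
    ring

theorem choose_aux (p m : ℕ) (h2 : m + 1 ≤ p) :
    (p.choose (m + 1) : ℚ) =
      (-1) ^ m * ((p : ℚ) / ((m : ℚ) + 1)) *
        ∑ j ∈ Finset.range (m + 1), (-1) ^ j * (p : ℚ) ^ j * MHS m (List.replicate j 1) := by
  induction m with
  | zero => simp [MHS]
  | succ m ih =>
    have h := Nat.choose_succ_right_eq p (m + 1)
    have h' : (p.choose (m + 1 + 1) : ℚ) * ((m : ℚ) + 1 + 1) =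
        p.choose (m + 1) * ((p : ℚ) - (m + 1)) := by
      have := congrArg (Nat.cast : ℕ → ℚ) h
      push_cast [Nat.cast_sub (by omega : m + 1 ≤ p)] at this
      exact this
    have a1 : (m : ℚ) + 1 ≠ 0 := by positivity
    have a2 : (m : ℚ) + 1 + 1 ≠ 0 := by positivity
    rw [ih (by omega)] at h'
    rw [mhs_sum_succ, eq_div_of_mul_eq a2 h']
    push_cast
    field_simp
    ring

/-- For integers `1 ≤ n ≤ p`, one has
`C(p,n) = (−1)^{n+1} (p/n) ∑_{j=0}^{n−1} (−1)^j p^j H_{n−1}({1}^j)` in `ℚ`. -/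
theorem choose_eq_weighted_mhs_sum (p n : ℕ) (h1 : 1 ≤ n) (h2 : n ≤ p) :
    (p.choose n : ℚ) =
      (-1) ^ (n + 1) * ((p : ℚ) / (n : ℚ)) *
        ∑ j ∈ Finset.range n, (-1) ^ j * (p : ℚ) ^ j * MHS (n - 1) (List.replicate j 1) := by
  obtain ⟨m, rfl⟩ := Nat.exists_eq_succ_of_ne_zero (by omega : n ≠ 0)
  rw [Nat.succ_eq_add_one, choose_aux p m h2, pow_succ, pow_succ]
  simp
end

section
/- For every prime p ≥ 5, the congruence H_{p−1}(1) ≡ 0 (mod p²) holds; that is, the p-adic valuation of the harmonic sum H_{p−1}(1) = ∑_{m=1}^{p−1} 1/m is at least 2. (Wolstenholme's Theorem.) -/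
theorem zmod_sum_aux (p : ℕ) [Fact p.Prime] (hp : 5 ≤ p) :
    ∑ m ∈ Finset.Icc 1 (p - 1), ((m : ZMod p)⁻¹) ^ 2 = 0 := by
  have h1 : ∑ x : ZMod p, x ^ 2 = 0 := by
    apply FiniteField.sum_pow_lt_card_sub_one
    rw [ZMod.card]; omega
  have h2 : ∑ x : ZMod p, (x⁻¹) ^ 2 = 0 := by
    rw [← h1]
    exact Equiv.sum_comp (Equiv.inv (ZMod p)) (fun x => x ^ 2)
  have h3 : ∑ m ∈ Finset.range p, ((m : ZMod p)⁻¹) ^ 2 = ∑ x : ZMod p, (x⁻¹) ^ 2 := by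
    refine Finset.sum_nbij' (fun m => (m : ZMod p)) (fun x => x.val) ?_ ?_ ?_ ?_ ?_
    · intro a _; simp
    · intro a _; simpa using ZMod.val_lt a
    · intro a ha; exact ZMod.val_cast_of_lt (Finset.mem_range.mp ha)
    · intro a _; simp
    · intro a _; rfl
  rw [← h2, ← h3]
  apply Finset.sum_subset
  · intro x hx; simp at hx ⊢; omega
  · intro x hx hx'
    have : x = 0 := by simp at hx hx'; omega
    simp [this]

theorem padic_aux (p : ℕ) [Fact p.Prime] (hp : 5 ≤ p) :
    ‖∑ m ∈ Finset.Icc 1 (p - 1), (m : ℤ_[p]).inv‖ ≤ (p : ℝ) ^ (-2 : ℤ) := by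
  have hn : ∀ m ∈ Finset.Icc 1 (p - 1), ‖(m : ℤ_[p])‖ = 1 := by
    intro m hm
    rw [Finset.mem_Icc] at hm
    rw [PadicInt.norm_natCast_eq_one_iff]
    exact Nat.coprime_of_lt_prime (by omega) (by omega) Fact.out
  have hr : ∀ m ∈ Finset.Icc 1 (p - 1), p - m ∈ Finset.Icc 1 (p - 1) := by
    intro m hm
    rw [Finset.mem_Icc] at hm ⊢
    omega
  have hrefl : ∑ m ∈ Finset.Icc 1 (p - 1), ((p - m : ℕ) : ℤ_[p]).inv
      = ∑ m ∈ Finset.Icc 1 (p - 1), (m : ℤ_[p]).inv := by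
    refine Finset.sum_nbij' (fun m => p - m) (fun m => p - m) hr hr ?_ ?_ ?_
    · intro a ha; simp at ha ⊢; omega
    · intro a ha; simp at ha ⊢; omega
    · intro a _; rfl
  have hS : 2 * ∑ m ∈ Finset.Icc 1 (p - 1), (m : ℤ_[p]).inv
      = p * ∑ m ∈ Finset.Icc 1 (p - 1), (m : ℤ_[p]).inv * ((p - m : ℕ) : ℤ_[p]).inv := by
    rw [two_mul]
    nth_rewrite 2 [← hrefl]
    rw [← Finset.sum_add_distrib, Finset.mul_sum]
    refine Finset.sum_congr rfl fun m hm => ?_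
    have e1 := PadicInt.mul_inv (hn m hm)
    have e2 := PadicInt.mul_inv (hn _ (hr m hm))
    have e3 : (m : ℤ_[p]) + ((p - m : ℕ) : ℤ_[p]) = p := by
      rw [Finset.mem_Icc] at hm
      rw [← Nat.cast_add]; congr 1; omega
    rw [← e3]
    linear_combination (-((p - m : ℕ) : ℤ_[p]).inv) * e1 - (m : ℤ_[p]).inv * e2
  have hT : (p : ℤ_[p]) ∣
      ∑ m ∈ Finset.Icc 1 (p - 1), (m : ℤ_[p]).inv * ((p - m : ℕ) : ℤ_[p]).inv := by
    rw [← PadicInt.norm_lt_one_iff_dvd, ← PadicInt.mem_nonunits,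
      ← IsLocalRing.mem_maximalIdeal, ← PadicInt.ker_toZMod, RingHom.mem_ker, map_sum]
    have hi : ∀ m ∈ Finset.Icc 1 (p - 1),
        PadicInt.toZMod (m : ℤ_[p]).inv = ((m : ZMod p))⁻¹ := by
      intro m hm
      have e := congrArg PadicInt.toZMod (PadicInt.mul_inv (hn m hm))
      rw [map_mul, map_natCast, map_one] at e
      exact eq_inv_of_mul_eq_one_right e
    rw [← neg_eq_zero, ← Finset.sum_neg_distrib, ← zmod_sum_aux p hp]
    refine Finset.sum_congr rfl fun m hm => ?_
    rw [map_mul, hi m hm, hi _ (hr m hm)]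
    rw [Finset.mem_Icc] at hm
    rw [Nat.cast_sub (by omega), ZMod.natCast_self, zero_sub, inv_neg]
    ring
  obtain ⟨c, hc⟩ := hT
  rw [hc] at hS
  have h2 : ‖(2 : ℤ_[p])‖ = 1 := by
    have := hn 2 (by rw [Finset.mem_Icc]; omega)
    exact_mod_cast this
  have := congrArg norm hS
  rw [norm_mul, norm_mul, norm_mul, h2, one_mul, PadicInt.norm_p] at this
  rw [this, zpow_neg, ← mul_assoc]
  have hc1 := PadicInt.norm_le_one c
  have : (p : ℝ)⁻¹ * (p : ℝ)⁻¹ = ((p : ℝ) ^ (2 : ℤ))⁻¹ := by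
    rw [← mul_inv]; congr 1; norm_cast; ring
  rw [this]
  exact mul_le_of_le_one_right (by positivity) hc1

/-- **Wolstenholme's Theorem.** For every prime `p ≥ 5`, the `p`-adic valuation of
`H_{p-1}(1)` is at least `2`. -/
theorem wolstenholme (p : ℕ) [Fact p.Prime] (hp : 5 ≤ p) :
    ‖((MHS (p - 1) [1] : ℚ) : ℚ_[p])‖ ≤ (p : ℝ) ^ (-2 : ℤ) := by
  have hk : ((MHS (p - 1) [1] : ℚ) : ℚ_[p])
      = ((∑ m ∈ Finset.Icc 1 (p - 1), (m : ℤ_[p]).inv : ℤ_[p]) : ℚ_[p]) := by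
    rw [PadicInt.coe_sum]
    simp only [MHS, pow_one, mul_one, Rat.cast_sum]
    refine Finset.sum_congr rfl fun m hm => ?_
    rw [Finset.mem_Icc] at hm
    have hn : ‖(m : ℤ_[p])‖ = 1 := by
      rw [PadicInt.norm_natCast_eq_one_iff]
      exact Nat.coprime_of_lt_prime (by omega) (by omega) Fact.out
    have e := congrArg (fun x : ℤ_[p] => (x : ℚ_[p])) (PadicInt.mul_inv hn)
    simp only [PadicInt.coe_mul, PadicInt.coe_natCast, PadicInt.coe_one] at e
    rw [eq_inv_of_mul_eq_one_right e]
    simp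
  rw [hk, ← PadicInt.norm_def]
  exact padic_aux p hp
end

section
/- For every prime p ≥ 5, the congruence H_{p−1}(1) + (1/3) p² H_{p−1}(2,1) ≡ 0 (mod p⁴) holds; that is, the p-adic valuation of H_{p−1}(1) + (1/3) p² H_{p−1}(2,1) is at least 4. -/
def hs {R : Type*} [CommRing R] (u : ℕ → R) (k : ℕ) : R := ∑ i ∈ Finset.range k, u i
def es {R : Type*} [CommRing R] (u : ℕ → R) (k : ℕ) : R := ∑ i ∈ Finset.range k, u i * hs u i
def ps {R : Type*} [CommRing R] (u : ℕ → R) (x : R) (k : ℕ) : R :=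
  ∏ i ∈ Finset.range k, (1 - x * u i)

lemma hs_succ {R : Type*} [CommRing R] (u : ℕ → R) (k : ℕ) : hs u (k+1) = hs u k + u k := by
  simp [hs, Finset.sum_range_succ]
lemma es_succ {R : Type*} [CommRing R] (u : ℕ → R) (k : ℕ) :
    es u (k+1) = es u k + u k * hs u k := by
  simp [es, Finset.sum_range_succ]
lemma ps_succ {R : Type*} [CommRing R] (u : ℕ → R) (x : R) (k : ℕ) :
    ps u x (k+1) = ps u x k * (1 - x * u k) := by
  simp [ps, Finset.prod_range_succ]

lemma ps_expand {R : Type*} [CommRing R] (u : ℕ → R) (x : R) (k : ℕ) :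
    x ^ 3 ∣ ps u x k - (1 - x * hs u k + x ^ 2 * es u k) := by
  induction k with
  | zero => simp [ps, hs, es]
  | succ k ih =>
    obtain ⟨c, hc⟩ := ih
    rw [ps_succ, hs_succ, es_succ]
    refine ⟨c * (1 - x * u k) - es u k * u k, ?_⟩
    linear_combination (1 - x * u k) * hc

lemma hs_map {R S : Type*} [CommRing R] [CommRing S] (f : R →+* S) (u : ℕ → R) (v : ℕ → S)
    (N : ℕ) (h : ∀ i < N, f (u i) = v i) (k : ℕ) (hk : k ≤ N) : f (hs u k) = hs v k := by
  simp only [hs, map_sum]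
  exact Finset.sum_congr rfl fun i hi => h i (by simp at hi; omega)

lemma es_map {R S : Type*} [CommRing R] [CommRing S] (f : R →+* S) (u : ℕ → R) (v : ℕ → S)
    (N : ℕ) (h : ∀ i < N, f (u i) = v i) (k : ℕ) (hk : k ≤ N) : f (es u k) = es v k := by
  simp only [es, map_sum, map_mul]
  refine Finset.sum_congr rfl fun i hi => ?_
  simp at hi
  rw [h i (by omega), hs_map f u v N h i (by omega)]

lemma ps_map {R S : Type*} [CommRing R] [CommRing S] (f : R →+* S) (u : ℕ → R) (v : ℕ → S)
    (x : R) (N : ℕ) (h : ∀ i < N, f (u i) = v i) (k : ℕ) (hk : k ≤ N) :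
    f (ps u x k) = ps v (f x) k := by
  simp only [ps, map_prod, map_sub, map_mul, map_one]
  refine Finset.prod_congr rfl fun i hi => ?_
  simp at hi
  rw [h i (by omega)]

def iv (K : Type*) [Field K] (i : ℕ) : K := ((i : K) + 1)⁻¹

lemma ps_choose {K : Type*} [Field K] (n : ℕ) (hn : ∀ i < n, ((i : K) + 1) ≠ 0) (k : ℕ)
    (hk : k < n) : n * iv K k * ps (iv K) n k = (-1) ^ k * (n.choose (k+1) : K) := by
  induction k with
  | zero => simp [iv, ps]
  | succ k ih =>
    have ih := ih (by omega)
    have h1 := hn k (by omega)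
    have h2 := hn (k+1) hk
    have h3 := Nat.choose_succ_right_eq n (k+1)
    have h4 : (n.choose (k+2) : K) * ((k:K)+1+1) = n.choose (k+1) * (n - (k+1)) := by
      have := congrArg (Nat.cast : ℕ → K) h3
      rw [Nat.cast_mul, Nat.cast_mul, Nat.cast_sub (by omega)] at this
      push_cast at this
      exact this
    rw [ps_succ]
    push_cast at h2
    have h5 : iv K (k+1) * ((k:K)+1+1) = 1 := by simp [iv]; field_simp
    have h6 : iv K k * ((k:K)+1) = 1 := by simp [iv]; field_simp
    have h7 : (n.choose (k+2) : K) = iv K (k+1) * (n.choose (k+1) * (n - (k+1))) := by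
      rw [← h4]; linear_combination (-(n.choose (k+2) : K)) * h5
    show _ = (-1)^(k+1) * (n.choose (k+2) : K)
    rw [h7]
    linear_combination (iv K (k+1) * (k + 1 - n)) * ih -
      n * iv K (k+1) * ps (iv K) n k * h6

lemma alt_choose {K : Type*} [Field K] (n : ℕ) (hn : ∀ i < n, ((i : K) + 1) ≠ 0) :
    ∑ k ∈ Finset.range n, (-1) ^ k * (n.choose (k+1) : K) * iv K k = hs (iv K) n := by
  induction n with
  | zero => simp [hs]
  | succ n ih =>
    have ih := ih (fun i hi => hn i (by omega))
    rw [hs_succ, ← ih]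
    have e1 : ∀ k ∈ Finset.range (n+1), (-1) ^ k * ((n+1).choose (k+1) : K) * iv K k =
        (-1) ^ k * ((n+1).choose (k+1) : K) * iv K n
         + (-1) ^ k * (n.choose (k+1) : K) * iv K k := by
      intro k hk
      simp at hk
      have h1 := hn k (by omega)
      have h2 := hn n (by omega)
      have h3 : ((n:K)+1) * n.choose k = (n+1).choose (k+1) * (k+1) := by
        exact_mod_cast congrArg (Nat.cast : ℕ → K) (Nat.add_one_mul_choose_eq n k)
      have h4 : (n.choose k : K) * iv K k = (n+1).choose (k+1) * iv K n := by
        simp only [iv]; field_simp; linear_combination h3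
      rw [Nat.choose_succ_succ] at *
      push_cast at *
      linear_combination (-1)^k * h4
    rw [Finset.sum_congr rfl e1, Finset.sum_add_distrib, ← Finset.sum_mul,
      Finset.sum_range_succ (n := n) (f := fun k => (-1) ^ k * (n.choose (k+1) : K) * iv K k)]
    have h5 : ∑ k ∈ Finset.range (n+1), (-1 : K) ^ k * ((n+1).choose (k+1) : K) = 1 := by
      have := Int.alternating_sum_range_choose_of_ne (n := n+1) (by omega)
      rw [Finset.sum_range_succ'] at this
      have h := congrArg (Int.cast : ℤ → K) this
      push_cast at h
      simp only [pow_succ, pow_zero, Nat.choose_zero_right, Nat.cast_one] at h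
      have h8 : ∑ k ∈ Finset.range (n+1), (-1 : K) ^ k * ((n+1).choose (k+1) : K)
        = - ∑ x ∈ Finset.range (n + 1), (-1:K) ^ x * -1 * ((n + 1).choose (x + 1):K) := by
        rw [← Finset.sum_neg_distrib]
        exact Finset.sum_congr rfl fun k _ => by ring
      rw [h8]
      linear_combination -h
    rw [h5]
    simp [add_comm]

lemma main_id {K : Type*} [Field K] (n : ℕ) (hn : ∀ i < n, ((i : K) + 1) ≠ 0) :
    n * ∑ k ∈ Finset.range n, iv K k ^ 2 * ps (iv K) n k = hs (iv K) n := by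
  rw [← alt_choose n hn, Finset.mul_sum]
  refine Finset.sum_congr rfl fun k hk => ?_
  rw [← ps_choose n hn k (by simpa using hk)]
  ring

section zmodp
variable (p : ℕ) [Fact p.Prime]

lemma zne (i : ℕ) (hi : i < p - 1) : ((i : ZMod p) + 1) ≠ 0 := by
  have : ((i+1 : ℕ) : ZMod p) ≠ 0 := by
    rw [Ne, ZMod.natCast_eq_zero_iff]
    exact Nat.not_dvd_of_pos_of_lt (by omega) (by omega)
  exact_mod_cast this

lemma sum_pow (e : ℕ) : ∑ i ∈ Finset.range (p-1), ((i : ZMod p) + 1) ^ e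
    = if p - 1 ∣ e then -1 else 0 := by
  have h := FiniteField.sum_pow_units (ZMod p) e
  rw [ZMod.card] at h
  rw [← h]
  have hp := (Fact.out : p.Prime).two_le
  symm
  refine Finset.sum_bij (fun (x : (ZMod p)ˣ) _ => (x : ZMod p).val - 1) ?_ ?_ ?_ ?_
  · intro x _
    have := ZMod.val_lt (x : ZMod p)
    have h0 : (x : ZMod p).val ≠ 0 := by simp
    simp; omega
  · intro x _ y _ hxy
    have h0 : (x : ZMod p).val ≠ 0 := by simp
    have h1 : (y : ZMod p).val ≠ 0 := by simp
    have : (x : ZMod p).val = (y : ZMod p).val := by omega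
    exact Units.ext (ZMod.val_injective p this)
  · intro i hi
    simp at hi
    refine ⟨Units.mk0 _ (zne p i hi), Finset.mem_univ _, ?_⟩
    have : ((i : ZMod p) + 1) = ((i+1 : ℕ) : ZMod p) := by push_cast; rfl
    simp only [Units.val_mk0]
    rw [this, ZMod.val_natCast, Nat.mod_eq_of_lt (by omega)]; rfl
  · intro x _
    have h0 : (x : ZMod p).val ≠ 0 := by simp
    have : ((((x : ZMod p).val - 1 : ℕ) : ZMod p) + 1) = x := by
      have h2 : (((x : ZMod p).val - 1 + 1 : ℕ) : ZMod p) = x := by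
        rw [Nat.sub_add_cancel (by omega)]; simp
      exact_mod_cast h2
    rw [this]

lemma iv_pow (i : ℕ) (hi : i < p - 1) (a : ℕ) (ha : a ≤ p - 1) :
    iv (ZMod p) i ^ a = ((i : ZMod p) + 1) ^ (p - 1 - a) := by
  have h := zne p i hi
  have h1 := ZMod.pow_card_sub_one_eq_one h
  rw [iv, inv_pow]
  refine inv_eq_of_mul_eq_one_right ?_
  rw [← pow_add, Nat.add_sub_cancel' ha, h1]

lemma sum_iv (a : ℕ) (h0 : 0 < a) (ha : a < p - 1) :
    ∑ i ∈ Finset.range (p-1), iv (ZMod p) i ^ a = 0 := by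
  rw [Finset.sum_congr rfl (fun i hi => iv_pow p i (by simpa using hi) a ha.le), sum_pow,
    if_neg]
  exact Nat.not_dvd_of_pos_of_lt (by omega) (by omega)

open Polynomial in
lemma poly_facts {R : Type*} [CommRing R] (u : ℕ → R) (k : ℕ) :
    ∃ q : R[X], q.natDegree ≤ k ∧ q.coeff 0 = 1 ∧ q.coeff 1 = - hs u k ∧ q.coeff 2 = es u k ∧
      ∀ x, q.eval x = ps u x k := by
  induction k with
  | zero => exact ⟨1, by simp, by simp, by simp [hs, coeff_one], by simp [es, coeff_one],
      by simp [ps]⟩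
  | succ k ih =>
    obtain ⟨q, h0, h1, h2, h3, h4⟩ := ih
    refine ⟨q - C (u k) * (q * X), ?_, ?_, ?_, ?_, ?_⟩
    · refine (natDegree_sub_le _ _).trans (max_le (by omega) ?_)
      refine (natDegree_C_mul_le _ _).trans ?_
      refine natDegree_mul_le.trans ?_
      have := natDegree_X_le (R := R)
      omega
    · simp [h1]
    · rw [coeff_sub, coeff_C_mul, coeff_mul_X, h1, h2, hs_succ]; ring
    · rw [coeff_sub, coeff_C_mul, coeff_mul_X, h2, h3, es_succ]; ring
    · intro x
      simp [h4, ps_succ]; ring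

lemma sum_ps (hp : 5 ≤ p) (k : ℕ) (hk : k < p - 1) :
    ∑ n ∈ Finset.range (p-1), iv (ZMod p) n ^ 2 * ps (iv (ZMod p)) ((n : ZMod p) + 1) k
      = - es (iv (ZMod p)) k := by
  obtain ⟨q, h0, h1, h2, h3, h4⟩ := poly_facts (iv (ZMod p)) k
  have : ∀ n ∈ Finset.range (p-1),
     iv (ZMod p) n ^ 2 * ps (iv (ZMod p)) ((n : ZMod p) + 1) k =
      ∑ d ∈ Finset.range (p-1), q.coeff d * ((n : ZMod p) + 1) ^ (p - 3 + d) := by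
    intro n hn
    rw [iv_pow p n (by simpa using hn) 2 (by omega), ← h4,
      Polynomial.eval_eq_sum_range' (n := p-1) (by omega), Finset.mul_sum]
    refine Finset.sum_congr rfl fun d _ => ?_
    rw [show p - 1 - 2 = p - 3 by omega, pow_add]; ring
  rw [Finset.sum_congr rfl this, Finset.sum_comm]
  simp_rw [← Finset.mul_sum, sum_pow]
  rw [Finset.sum_eq_single 2]
  · rw [if_pos, h3]; · ring
    exact dvd_of_eq (by omega)
  · intro d hd hd2
    simp at hd
    rw [if_neg, mul_zero]
    rintro ⟨c, hc⟩
    have : c = 0 ∨ c = 1 ∨ 2 ≤ c := by omega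
    rcases this with rfl | rfl | h
    · omega
    · omega
    · have : (p-1)*2 ≤ (p-1)*c := Nat.mul_le_mul_left _ h
      omega
  · intro h; simp at h; omega

lemma iv_reflect (i : ℕ) (hi : i < p - 1) : iv (ZMod p) (p - 1 - 1 - i) = - iv (ZMod p) i := by
  have : (((p - 1 - 1 - i : ℕ) : ZMod p) + 1) = - ((i : ZMod p) + 1) := by
    rw [eq_neg_iff_add_eq_zero]
    have h : ((p - 1 - 1 - i + 1 + (i + 1) : ℕ) : ZMod p) = 0 := by
      rw [show p - 1 - 1 - i + 1 + (i + 1) = p by omega]; simp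
    exact_mod_cast h
  rw [iv, iv, this, inv_neg]

lemma hs_reflect (hp : 5 ≤ p) (n : ℕ) (hn : n ≤ p - 1) :
    hs (iv (ZMod p)) (p - 1 - n) = hs (iv (ZMod p)) n := by
  induction n with
  | zero =>
    have := sum_iv p 1 (by omega) (by omega)
    simpa [hs] using this
  | succ n ih =>
    have ih := ih (by omega)
    rw [show p - 1 - n = (p - 1 - (n+1)) + 1 by omega, hs_succ] at ih
    have h := iv_reflect p n (by omega)
    rw [show p - 1 - 1 - n = p - 1 - (n+1) by omega] at h
    rw [hs_succ, ← ih, h]; ring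

lemma sum_h3 (hp : 7 ≤ p) :
    ∑ n ∈ Finset.range (p-1), iv (ZMod p) n ^ 3 * hs (iv (ZMod p)) (n+1) = 0 := by
  have h1 := Finset.sum_range_reflect
    (fun n => iv (ZMod p) n ^ 3 * hs (iv (ZMod p)) (n+1)) (p-1)
  have h2 : ∀ n ∈ Finset.range (p-1),
     iv (ZMod p) (p - 1 - 1 - n) ^ 3 * hs (iv (ZMod p)) (p - 1 - 1 - n +1)
     = iv (ZMod p) n ^ 4 - iv (ZMod p) n ^ 3 * hs (iv (ZMod p)) (n+1) := by
    intro n hn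
    simp at hn
    rw [iv_reflect p n hn, show p - 1 - 1 - n + 1 = p - 1 - n by omega,
      hs_reflect p (by omega) n (by omega), hs_succ]
    ring
  rw [Finset.sum_congr rfl h2, Finset.sum_sub_distrib, sum_iv p 4 (by omega) (by omega)] at h1
  have h3 : (2 : ZMod p) ≠ 0 := by
    have := zne p 1 (by omega)
    norm_num at this; exact this
  refine (mul_eq_zero.1 (?_ : (2 : ZMod p) * _ = 0)).resolve_left h3
  linear_combination -h1

lemma ps_zero (n k : ℕ) (hnk : n < k) (hn : n < p - 1) :
    ps (iv (ZMod p)) ((n : ZMod p) + 1) k = 0 := by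
  refine Finset.prod_eq_zero (Finset.mem_range.2 hnk) ?_
  rw [iv, mul_inv_cancel₀ (zne p n hn), sub_self]

lemma h211 (hp : 7 ≤ p) :
    ∑ k ∈ Finset.range (p-1), iv (ZMod p) k ^ 2 * es (iv (ZMod p)) k = 0 := by
  have h1 : ∀ k ∈ Finset.range (p-1), iv (ZMod p) k ^ 2 * es (iv (ZMod p)) k =
     - ∑ n ∈ Finset.range (p-1), iv (ZMod p) k ^ 2 *
       (iv (ZMod p) n ^ 2 * ps (iv (ZMod p)) ((n : ZMod p) + 1) k) := by
    intro k hk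
    rw [← Finset.mul_sum, sum_ps p (by omega) k (by simpa using hk)]; ring
  rw [Finset.sum_congr rfl h1, Finset.sum_neg_distrib, neg_eq_zero, Finset.sum_comm,
    ← sum_h3 p hp]
  refine Finset.sum_congr rfl fun n hn => ?_
  simp at hn
  have h2 := main_id (K := ZMod p) (n+1) (fun i hi => zne p i (by omega))
  have h3 : ∑ k ∈ Finset.range (p-1), iv (ZMod p) k ^ 2 *
       (iv (ZMod p) n ^ 2 * ps (iv (ZMod p)) ((n : ZMod p) + 1) k) =
       ∑ k ∈ Finset.range (n+1), iv (ZMod p) k ^ 2 *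
       (iv (ZMod p) n ^ 2 * ps (iv (ZMod p)) ((n : ZMod p) + 1) k) := by
    symm
    refine Finset.sum_subset (by intro x; simp; omega) ?_
    intro k _ hk
    simp at hk
    rw [ps_zero p n k (by omega) hn]; ring
  rw [h3, ← h2, Finset.mul_sum, Finset.mul_sum]
  refine Finset.sum_congr rfl fun k _ => ?_
  have h4 : iv (ZMod p) n * ((n : ZMod p) + 1) = 1 := inv_mul_cancel₀ (zne p n hn)
  push_cast
  linear_combination (-iv (ZMod p) k ^ 2 *
       (iv (ZMod p) n ^ 2 * ps (iv (ZMod p)) ((n : ZMod p) + 1) k)) * h4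

/-- inverses in the p-adic integers -/
noncomputable def uz (i : ℕ) : ℤ_[p] := PadicInt.inv ((i : ℤ_[p]) + 1)

lemma norm_nat (m : ℕ) (h0 : 0 < m) (hm : m < p) : ‖(m : ℤ_[p])‖ = 1 := by
  rw [PadicInt.norm_natCast_eq_one_iff]
  exact ((Nat.Prime.coprime_iff_not_dvd Fact.out).2 (Nat.not_dvd_of_pos_of_lt h0 hm))

lemma uz_mul (i : ℕ) (hi : i < p - 1) : ((i : ℤ_[p]) + 1) * uz p i = 1 := by
  have := norm_nat p (i+1) (by omega) (by omega)
  push_cast at this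
  exact PadicInt.mul_inv this

lemma uz_zmod (i : ℕ) (hi : i < p - 1) : PadicInt.toZMod (uz p i) = iv (ZMod p) i := by
  have := congrArg PadicInt.toZMod (uz_mul p i hi)
  rw [map_mul, map_add, map_natCast, map_one] at this
  exact eq_inv_of_mul_eq_one_right this

lemma uz_coe (i : ℕ) (hi : i < p - 1) : PadicInt.Coe.ringHom (uz p i) = iv ℚ_[p] i := by
  have := congrArg (PadicInt.Coe.ringHom (p := p)) (uz_mul p i hi)
  rw [map_mul, map_add, map_natCast, map_one] at this
  exact eq_inv_of_mul_eq_one_right this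

lemma dvd_iff (x : ℤ_[p]) : (p : ℤ_[p]) ∣ x ↔ PadicInt.toZMod x = 0 := by
  rw [← RingHom.mem_ker, PadicInt.ker_toZMod, PadicInt.maximalIdeal_eq_span_p,
    Ideal.mem_span_singleton]

lemma stepB (hp : 7 ≤ p) : (p : ℤ_[p]) ^ 4 ∣ hs (uz p) (p-1) -
    (p * (∑ k ∈ Finset.range (p-1), uz p k ^ 2)
      - p ^ 2 * ∑ k ∈ Finset.range (p-1), uz p k ^ 2 * hs (uz p) k) := by
  have h1 : hs (uz p) (p-1) = p * ∑ k ∈ Finset.range (p-1), uz p k ^ 2 * ps (uz p) p k := by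
    have h := main_id (K := ℚ_[p]) p (fun i _ => by exact_mod_cast Nat.succ_ne_zero i)
    have hc := ps_choose (K := ℚ_[p]) p (fun i _ => by exact_mod_cast Nat.succ_ne_zero i) (p-1)
      (by omega)
    have hpp : p - 1 + 1 = p := by omega
    have hodd : (-1 : ℚ_[p]) ^ (p-1) = 1 := by
      refine Even.neg_one_pow ?_
      exact (Fact.out : p.Prime).even_sub_one (by omega)
    rw [hpp, Nat.choose_self, hodd] at hc
    have e1 := hs_succ (iv ℚ_[p]) (p-1)
    have e2 := Finset.sum_range_succ (fun k => iv ℚ_[p] k ^ 2 * ps (iv ℚ_[p]) p k) (p-1)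
    rw [hpp] at e1 e2
    rw [e1, e2, mul_add] at h
    have h5 : hs (iv ℚ_[p]) (p-1) = p * ∑ k ∈ Finset.range (p-1),
        iv ℚ_[p] k ^ 2 * ps (iv ℚ_[p]) p k := by
      linear_combination -h + iv ℚ_[p] (p-1) * hc
    have hinj : Function.Injective (PadicInt.Coe.ringHom (p := p)) := Subtype.coe_injective
    apply hinj
    rw [hs_map _ _ _ (p-1) (uz_coe p) _ le_rfl, h5, map_mul, map_sum, map_natCast]
    congr 1
    refine Finset.sum_congr rfl fun k hk => ?_
    simp at hk
    rw [map_mul, map_pow, uz_coe p k hk, ps_map _ _ _ _ (p-1) (uz_coe p) _ hk.le, map_natCast]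
  have h2 : (p : ℤ_[p]) ∣ ∑ k ∈ Finset.range (p-1), uz p k ^ 2 * es (uz p) k := by
    rw [dvd_iff, map_sum, ← h211 p hp]
    refine Finset.sum_congr rfl fun k hk => ?_
    simp at hk
    rw [map_mul, map_pow, uz_zmod p k hk, es_map _ _ _ (p-1) (uz_zmod p) _ hk.le]
  have h3 : (p : ℤ_[p]) ^ 3 ∣ ∑ k ∈ Finset.range (p-1), uz p k ^ 2 *
      (ps (uz p) p k - (1 - p * hs (uz p) k + p ^ 2 * es (uz p) k)) :=
    Finset.dvd_sum fun k _ => Dvd.dvd.mul_left (ps_expand _ _ _) _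
  have h4 : ∑ k ∈ Finset.range (p-1), uz p k ^ 2 *
      (ps (uz p) p k - (1 - p * hs (uz p) k + p ^ 2 * es (uz p) k)) =
      ∑ k ∈ Finset.range (p-1), uz p k ^ 2 * ps (uz p) p k
      - ∑ k ∈ Finset.range (p-1), uz p k ^ 2
      + p * ∑ k ∈ Finset.range (p-1), uz p k ^ 2 * hs (uz p) k
      - p ^ 2 * ∑ k ∈ Finset.range (p-1), uz p k ^ 2 * es (uz p) k := by
    rw [Finset.mul_sum, Finset.mul_sum, ← Finset.sum_sub_distrib, ← Finset.sum_add_distrib,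
      ← Finset.sum_sub_distrib]
    exact Finset.sum_congr rfl fun k _ => by ring
  rw [h4] at h3
  obtain ⟨c, hc⟩ := h3
  obtain ⟨d, hd⟩ := h2
  refine ⟨c + d, ?_⟩
  rw [h1]
  linear_combination p * hc + p ^ 3 * hd

lemma uz_reflect (i : ℕ) (hi : i < p - 1) :
    uz p (p - 1 - 1 - i) = p * uz p i * uz p (p - 1 - 1 - i) - uz p i := by
  have h1 := uz_mul p i hi
  have h2 := uz_mul p (p - 1 - 1 - i) (by omega)
  have : (((p - 1 - 1 - i : ℕ) : ℤ_[p]) + 1) = p - (i + 1) := by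
    have h : ((p - 1 - 1 - i + 1 + (i + 1) : ℕ) : ℤ_[p]) = p := by
      rw [show p - 1 - 1 - i + 1 + (i + 1) = p by omega]
    push_cast at h
    linear_combination h
  rw [this] at h2
  linear_combination (-uz p (p - 1 - 1 - i)) * h1 - uz p i * h2

lemma two_cancel (hp : 7 ≤ p) (m : ℕ) (h0 : 0 < m) (hm : m < p) (d x : ℤ_[p])
    (h : d ∣ (m : ℤ_[p]) * x) : d ∣ x := by
  have : IsUnit (m : ℤ_[p]) := PadicInt.isUnit_iff.2 (norm_nat p m h0 hm)
  exact (this.dvd_mul_left).1 h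

lemma dvd_S4 (hp : 7 ≤ p) : (p : ℤ_[p]) ∣ ∑ k ∈ Finset.range (p-1), uz p k ^ 4 := by
  rw [dvd_iff, map_sum, ← sum_iv p 4 (by omega) (by omega)]
  refine Finset.sum_congr rfl fun k hk => ?_
  rw [map_pow, uz_zmod p k (by simpa using hk)]

lemma dvd_S3 (hp : 7 ≤ p) : (p : ℤ_[p]) ^ 2 ∣ ∑ k ∈ Finset.range (p-1), uz p k ^ 3 := by
  refine two_cancel p hp 2 (by omega) (by omega) _ _ ?_
  have h1 := Finset.sum_range_reflect (fun n => uz p n ^ 3) (p-1)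
  have h2 : (p : ℤ_[p]) ^ 2 ∣ ∑ k ∈ Finset.range (p-1),
      (uz p (p - 1 - 1 - k) ^ 3 + uz p k ^ 3 + 3 * p * uz p k ^ 4) := by
    refine Finset.dvd_sum fun k hk => ?_
    have h := uz_reflect p k (by simpa using hk)
    set a := uz p k
    set b := uz p (p - 1 - 1 - k)
    have h' : b = - a - p * a ^ 2 + p ^ 2 * a ^ 2 * b := by
      linear_combination (1 + p * a) * h
    generalize a ^ 2 * b = c at *
    have h'' : b = - a - p * a ^ 2 + p ^ 2 * (a^2 * b) := by linear_combination h'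
    generalize a ^ 2 * b = c at h''
    rw [h'']
    refine ⟨-3 * a ^ 5 + 3 * a^2 * c - p * a ^ 6 + 6 * p * a ^ 3 * c + 3*p^2*a^4*c
      - 3 * p^2 * a * c^2 - 3 * p^3 * a^2*c^2 + p ^ 4 * c ^ 3, ?_⟩
    ring
  rw [Finset.sum_add_distrib, Finset.sum_add_distrib, h1, ← Finset.mul_sum] at h2
  obtain ⟨c, hc⟩ := h2
  obtain ⟨d, hd⟩ := dvd_S4 p hp
  refine ⟨c - 3 * d, ?_⟩
  push_cast
  linear_combination hc - 3 * p * hd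

lemma stepA (hp : 7 ≤ p) : (p : ℤ_[p]) ^ 4 ∣ 2 * hs (uz p) (p-1) +
    p * (∑ k ∈ Finset.range (p-1), uz p k ^ 2) := by
  have h1 := Finset.sum_range_reflect (fun n => uz p n) (p-1)
  have h2 : (p : ℤ_[p]) ^ 4 ∣ ∑ k ∈ Finset.range (p-1),
      (uz p (p - 1 - 1 - k) + uz p k + p * uz p k ^ 2 + p ^ 2 * uz p k ^ 3
        + p ^ 3 * uz p k ^ 4) := by
    refine Finset.dvd_sum fun k hk => ?_
    have h := uz_reflect p k (by simpa using hk)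
    set a := uz p k
    set b := uz p (p - 1 - 1 - k)
    refine ⟨a ^ 4 * b, ?_⟩
    linear_combination (1 + p * a + p ^ 2 * a ^ 2 + p ^ 3 * a ^ 3) * h
  simp only [Finset.sum_add_distrib, h1, ← Finset.mul_sum] at h2
  obtain ⟨c, hc⟩ := h2
  obtain ⟨d, hd⟩ := dvd_S4 p hp
  obtain ⟨f, hf⟩ := dvd_S3 p hp
  refine ⟨c - d - f, ?_⟩
  rw [hs]
  linear_combination hc - p ^ 3 * hd - p ^ 2 * hf

lemma final (hp : 7 ≤ p) : ∃ c : ℤ_[p], 3 * hs (uz p) (p-1) +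
    p ^ 2 * (∑ k ∈ Finset.range (p-1), uz p k ^ 2 * hs (uz p) k) = p ^ 4 * (3 * c) := by
  obtain ⟨c, hc⟩ := stepA p hp
  obtain ⟨d, hd⟩ := stepB p hp
  have h3 := uz_mul p 2 (by omega)
  push_cast at h3
  refine ⟨uz p 2 * (c + d), ?_⟩
  linear_combination hc + hd - p ^ 4 * (c + d) * h3

end zmodp

lemma sum_Icc_range (f : ℕ → ℚ) (n : ℕ) :
    ∑ i ∈ Finset.Icc 1 n, f i = ∑ i ∈ Finset.range n, f (i+1) := by
  induction n with
  | zero => simp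
  | succ n ih => rw [Finset.sum_Icc_succ_top (by omega), ih, Finset.sum_range_succ]

lemma mhs1 (n : ℕ) : MHS n [1] = hs (iv ℚ) n := by
  simp [MHS, hs, iv, sum_Icc_range]

lemma mhs21 (n : ℕ) : MHS n [2, 1] = ∑ k ∈ Finset.range n, iv ℚ k ^ 2 * hs (iv ℚ) k := by
  rw [MHS, sum_Icc_range]
  refine Finset.sum_congr rfl fun k _ => ?_
  rw [Nat.add_sub_cancel, mhs1]
  simp [iv]


/-- For every prime `p ≥ 5`, the `p`-adic valuation of
`H_{p-1}(1) + (1/3) p² H_{p-1}(2,1)` is at least `4`. -/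
theorem weighted_wolstenholme_mod_p4 (p : ℕ) [Fact p.Prime] (hp : 5 ≤ p) :
    ‖((MHS (p - 1) [1] + (1 / 3) * (p : ℚ) ^ 2 * MHS (p - 1) [2, 1] : ℚ) : ℚ_[p])‖
      ≤ (p : ℝ) ^ (-4 : ℤ) := by
  have h56 : p = 5 ∨ 7 ≤ p := by
    have : p ≠ 6 := by rintro rfl; exact absurd (Fact.out : Nat.Prime 6) (by norm_num)
    omega
  rcases h56 with rfl | hp7
  · have h : (MHS (5 - 1) [1] + (1 / 3) * ((5 : ℕ) : ℚ) ^ 2 * MHS (5 - 1) [2, 1] : ℚ)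
        = 5 ^ 4 * (1 / 96) := by
      rw [mhs1, mhs21]
      norm_num [hs, iv, Finset.sum_range_succ]
    rw [h]
    have h96 : ‖((96 : ℕ) : ℚ_[5])‖ = 1 := by
      rw [Padic.norm_natCast_eq_one_iff]; norm_num
    have h5 : ‖((5 : ℕ) : ℚ_[5])‖ = (5:ℝ)⁻¹ := by simpa using Padic.norm_p (p := 5)
    push_cast at h96 h5 ⊢
    rw [norm_mul, norm_pow, norm_div, h96, h5]
    norm_num
  · obtain ⟨c, hc⟩ := final p hp7
    have hc' := congrArg (PadicInt.Coe.ringHom (p := p)) hc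
    have hmapQ : ∀ i < p - 1, (Rat.castHom ℚ_[p]) (iv ℚ i) = iv ℚ_[p] i := by
      intro i _; simp [iv]
    have e1 : ((MHS (p - 1) [1] : ℚ) : ℚ_[p]) = PadicInt.Coe.ringHom (hs (uz p) (p-1)) := by
      rw [mhs1, hs_map _ _ _ (p-1) (uz_coe p) _ le_rfl,
        ← hs_map _ _ _ (p-1) hmapQ _ le_rfl]; rfl
    have e2 : ((MHS (p - 1) [2, 1] : ℚ) : ℚ_[p]) =
        PadicInt.Coe.ringHom (∑ k ∈ Finset.range (p-1), uz p k ^ 2 * hs (uz p) k) := by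
      rw [mhs21, ← Rat.coe_castHom, map_sum, map_sum]
      refine Finset.sum_congr rfl fun k hk => ?_
      simp at hk
      rw [map_mul, map_mul, map_pow, map_pow, uz_coe p k hk, hmapQ k hk,
        hs_map _ _ _ (p-1) (uz_coe p) _ hk.le, hs_map _ _ _ (p-1) hmapQ _ hk.le]
    have e3 : ((MHS (p - 1) [1] + (1 / 3) * (p : ℚ) ^ 2 * MHS (p - 1) [2, 1] : ℚ) : ℚ_[p])
        = ((p ^ 4 * c : ℤ_[p]) : ℚ_[p]) := by
      rw [Rat.cast_add, Rat.cast_mul, e1, e2]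
      rw [map_add, map_mul, map_mul, map_mul, map_mul, map_pow, map_pow, map_natCast,
        map_ofNat] at hc'
      have h3 : (3 : ℚ_[p]) ≠ 0 := by norm_num
      apply mul_left_cancel₀ h3
      push_cast
      have hcc : PadicInt.Coe.ringHom c = (c : ℚ_[p]) := rfl
      rw [hcc] at hc'
      field_simp
      linear_combination hc'
    rw [e3, PadicInt.padic_norm_e_of_padicInt, norm_mul, norm_pow, PadicInt.norm_p]
    have := PadicInt.norm_le_one c
    calc ((p:ℝ)⁻¹)^4 * ‖c‖ ≤ ((p:ℝ)⁻¹)^4 * 1 := by gcongr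
      _ = (p : ℝ) ^ (-4 : ℤ) := by
        rw [mul_one, zpow_neg, inv_pow]; norm_cast
end

section
/- For every prime p ≥ 5, the congruence H_{p−1}(1) + (1/3) p² H_{p−1}(2,1) − (1/6) p⁴ H_{p−1}(4,1) ≡ 0 (mod p⁵) holds; that is, the p-adic valuation of H_{p−1}(1) + (1/3) p² H_{p−1}(2,1) − (1/6) p⁴ H_{p−1}(4,1) is at least 5. -/
open Finset

/-- the `p`-integral rationals -/
noncomputable def pInt (p : ℕ) [Fact p.Prime] : Subring ℚ :=
  (PadicInt.subring p).comap (Rat.castHom ℚ_[p])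

lemma mem_pInt {p : ℕ} [Fact p.Prime] {x : ℚ} : x ∈ pInt p ↔ ‖(x : ℚ_[p])‖ ≤ 1 := by
  simp [pInt, PadicInt.subring]

attribute [irreducible] pInt

lemma inv_mem_pInt {p : ℕ} [Fact p.Prime] {n : ℕ} (h0 : 0 < n) (h : n < p) :
    (n : ℚ)⁻¹ ∈ pInt p := by
  rw [mem_pInt]
  have h1 : ‖((n : ℕ) : ℚ_[p])‖ = 1 := by
    rw [Padic.norm_natCast_eq_one_iff]
    exact (Nat.coprime_of_lt_prime h0.ne' h Fact.out)
  push_cast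
  rw [norm_inv, h1]; simp

/-- pairs -/
def SS (p : ℕ) : Finset (ℕ × ℕ) :=
  ((Icc 1 (p-1)) ×ˢ (Icc 1 (p-1))).filter (fun x => x.1 + x.2 < p)

lemma mem_SS {p : ℕ} {x : ℕ × ℕ} : x ∈ SS p ↔ 0 < x.1 ∧ 0 < x.2 ∧ x.1 + x.2 < p := by
  simp [SS]; omega

lemma SS_swap (p : ℕ) (f : ℕ → ℕ → ℚ) :
    ∑ x ∈ SS p, f x.1 x.2 = ∑ x ∈ SS p, f x.2 x.1 := by
  refine Finset.sum_nbij' (fun x => (x.2, x.1)) (fun x => (x.2, x.1)) ?_ ?_ ?_ ?_ ?_ <;>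
    simp [mem_SS] <;> omega

lemma SS_rot (p : ℕ) (f : ℕ → ℕ → ℚ) :
    ∑ x ∈ SS p, f x.1 (p - (x.1 + x.2)) = ∑ x ∈ SS p, f x.1 x.2 := by
  refine Finset.sum_nbij' (fun x => (x.1, p - (x.1 + x.2))) (fun x => (x.1, p - (x.1 + x.2)))
    ?_ ?_ ?_ ?_ ?_ <;> simp [mem_SS] <;> omega

lemma SS_sum (p : ℕ) (f : ℕ → ℕ → ℚ) :
    ∑ n ∈ Icc 1 (p-1), ∑ m ∈ Icc 1 (n-1), f n m = ∑ x ∈ SS p, f (x.1 + x.2) x.1 := by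
  rw [Finset.sum_sigma']
  refine Finset.sum_nbij' (fun x => (x.2, x.1 - x.2)) (fun x => ⟨x.1 + x.2, x.1⟩)
    ?_ ?_ ?_ ?_ ?_
  · simp [mem_SS]; omega
  · simp [mem_SS]; omega
  · rintro ⟨a, b⟩ h
    simp at h ⊢; omega
  · simp
  · rintro ⟨a, b⟩ h
    simp at h
    have : b + (a - b) = a := by omega
    simp [this]

lemma stuffle (N : ℕ) (f g : ℕ → ℚ) :
    (∑ n ∈ Icc 1 N, f n) * (∑ n ∈ Icc 1 N, g n)
      = ∑ n ∈ Icc 1 N, ∑ m ∈ Icc 1 (n-1), f n * g m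
        + ∑ n ∈ Icc 1 N, ∑ m ∈ Icc 1 (n-1), g n * f m + ∑ n ∈ Icc 1 N, f n * g n := by
  induction N with
  | zero => simp
  | succ N ih =>
    simp only [Finset.sum_Icc_succ_top (Nat.le_add_left 1 N), Nat.add_sub_cancel,
      ← Finset.mul_sum] at ih ⊢
    linear_combination ih

/-- power sums -/
def hx (p a : ℕ) : ℚ := ∑ n ∈ Icc 1 (p-1), (n : ℚ)⁻¹ ^ a

/-- double sums -/
def hh (p a b : ℕ) : ℚ := ∑ x ∈ SS p, ((x.1 : ℚ) + x.2)⁻¹ ^ a * (x.1 : ℚ)⁻¹ ^ b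

lemma hh_eq (p a b : ℕ) : ∑ n ∈ Icc 1 (p-1), ∑ m ∈ Icc 1 (n-1), (n : ℚ)⁻¹ ^ a * (m : ℚ)⁻¹ ^ b
    = hh p a b := by
  rw [SS_sum p (fun n m => (n : ℚ)⁻¹ ^ a * (m : ℚ)⁻¹ ^ b)]
  simp [hh]

lemma hst (p a b : ℕ) : hx p a * hx p b = hh p a b + hh p b a + hx p (a+b) := by
  unfold hx
  rw [stuffle, hh_eq, hh_eq]
  simp only [pow_add]

lemma refl_sum (p : ℕ) (f : ℕ → ℚ) :
    ∑ n ∈ Icc 1 (p-1), f (p - n) = ∑ n ∈ Icc 1 (p-1), f n := by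
  refine Finset.sum_nbij' (fun x => p - x) (fun x => p - x) ?_ ?_ ?_ ?_ ?_ <;> simp <;> omega

section
variable {p : ℕ} [Fact p.Prime]

lemma hx_mem (a : ℕ) : hx p a ∈ pInt p := by
  refine Subring.sum_mem _ fun n hn => ?_
  simp at hn
  exact Subring.pow_mem _ (inv_mem_pInt (by omega) (by omega)) _

lemma hh_mem (a b : ℕ) : hh p a b ∈ pInt p := by
  refine Subring.sum_mem _ fun x hx => ?_
  rw [mem_SS] at hx
  refine Subring.mul_mem _ (Subring.pow_mem _ ?_ _)
    (Subring.pow_mem _ (inv_mem_pInt (by omega) (by omega)) _)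
  have := inv_mem_pInt (p := p) (n := x.1 + x.2) (by omega) (by omega)
  simpa using this

lemma p_mem (n : ℕ) : (n : ℚ) ∈ pInt p := natCast_mem _ n

lemma refl_gen (f g : ℕ → ℚ) (k : ℕ)
    (h : ∀ n, 0 < n → n < p → ∃ r ∈ pInt p, f (p - n) = g n + (p:ℚ)^k * r) :
    ∃ r ∈ pInt p, ∑ n ∈ Icc 1 (p-1), f n = ∑ n ∈ Icc 1 (p-1), g n + (p:ℚ)^k * r := by
  choose! r hr hr' using h
  refine ⟨∑ n ∈ Icc 1 (p-1), r n, Subring.sum_mem _ fun n hn => ?_, ?_⟩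
  · simp at hn
    exact hr n (by omega) (by omega)
  · rw [← refl_sum, Finset.mul_sum, ← Finset.sum_add_distrib]
    refine Finset.sum_congr rfl fun n hn => ?_
    simp at hn
    exact hr' n (by omega) (by omega)

lemma SS_gen (f g : ℕ × ℕ → ℚ) (k : ℕ)
    (h : ∀ x ∈ SS p, ∃ r ∈ pInt p, f x = g x + (p:ℚ)^k * r) :
    ∃ r ∈ pInt p, ∑ x ∈ SS p, f x = ∑ x ∈ SS p, g x + (p:ℚ)^k * r := by
  choose! r hr hr' using h
  refine ⟨∑ x ∈ SS p, r x, Subring.sum_mem _ hr, ?_⟩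
  rw [Finset.mul_sum, ← Finset.sum_add_distrib]
  exact Finset.sum_congr rfl hr'

/-- basic data about `n` and `p - n` -/
lemma basic {n : ℕ} (h0 : 0 < n) (h : n < p) :
    ∃ u v : ℚ, u ∈ pInt p ∧ v ∈ pInt p ∧ u = (n:ℚ)⁻¹ ∧ v = ((p - n : ℕ) : ℚ)⁻¹ ∧
      v = -u + p * u * v := by
  refine ⟨_, _, inv_mem_pInt h0 h, inv_mem_pInt (n := p - n) (by omega) (by omega), rfl, rfl, ?_⟩
  have h1 : ((p - n : ℕ) : ℚ) ≠ 0 := by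
    exact_mod_cast (by omega : p - n ≠ 0)
  have h2 : (n : ℚ) ≠ 0 := by exact_mod_cast h0.ne'
  rw [Nat.cast_sub h.le] at *
  field_simp
  ring

lemma refl1 : ∃ r ∈ pInt p, hx p 1 = -hx p 1 - p * hx p 2 - p^2 * hx p 3 - p^3 * hx p 4
    - p^4 * hx p 5 + p^5 * r := by
  obtain ⟨r, hr, h⟩ := refl_gen (p := p) (fun n => (n:ℚ)⁻¹ ^ 1)
    (fun n => -((n:ℚ)⁻¹ ^ 1) - p * (n:ℚ)⁻¹ ^ 2 - p^2 * (n:ℚ)⁻¹ ^ 3 - p^3 * (n:ℚ)⁻¹ ^ 4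
      - p^4 * (n:ℚ)⁻¹ ^ 5) 5 (by
    intro n h0 h
    obtain ⟨u, v, hu, hv, e1, e2, e⟩ := basic (p := p) h0 h
    simp only [← e1, ← e2]
    refine ⟨u^5 * v, by
      repeat' first | assumption | exact natCast_mem _ _ | exact ofNat_mem _ _ | exact one_mem _ | apply add_mem | apply sub_mem | apply neg_mem | apply mul_mem | apply pow_mem, ?_⟩
    linear_combination (1+p*u+p^2*u^2+p^3*u^3+p^4*u^4)*e)
  refine ⟨r, hr, ?_⟩
  simp only [Finset.sum_sub_distrib, Finset.sum_neg_distrib, ← Finset.mul_sum] at h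
  exact h

lemma refl3 : ∃ r ∈ pInt p, hx p 3 = -hx p 3 - 3 * p * hx p 4 - 6 * p^2 * hx p 5 + p^3 * r := by
  obtain ⟨r, hr, h⟩ := refl_gen (p := p) (fun n => (n:ℚ)⁻¹ ^ 3)
    (fun n => -((n:ℚ)⁻¹ ^ 3) - 3 * p * (n:ℚ)⁻¹ ^ 4 - 6 * p^2 * (n:ℚ)⁻¹ ^ 5) 3 (by
    intro n h0 h
    obtain ⟨u, v, hu, hv, e1, e2, e⟩ := basic (p := p) h0 h
    simp only [← e1, ← e2]
    have e3 : v = -(u+p*u^2+p^2*u^3) + p^3 * (u^3*v) := by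
      linear_combination (1+p*u+p^2*u^2)*e
    refine ⟨-u^3*(7*u^3+6*p*u^4+3*p^2*u^5+p^3*u^6)
      + (3*(u+p*u^2+p^2*u^3)^2*(u^3*v) - 3*(u+p*u^2+p^2*u^3)*p^3*(u^3*v)^2+p^6*(u^3*v)^3),
      by
      repeat' first | assumption | exact natCast_mem _ _ | exact ofNat_mem _ _ | exact one_mem _ | apply add_mem | apply sub_mem | apply neg_mem | apply mul_mem | apply pow_mem, ?_⟩
    have e4 : v^3 = (-(u+p*u^2+p^2*u^3) + p^3 * (u^3*v))^3 := by rw [← e3]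
    rw [e4]; ring)
  refine ⟨r, hr, ?_⟩
  simp only [Finset.sum_sub_distrib, Finset.sum_neg_distrib, ← Finset.mul_sum] at h
  exact h

lemma refl5 : ∃ r ∈ pInt p, hx p 5 = -hx p 5 + p^1 * r := by
  obtain ⟨r, hr, h⟩ := refl_gen (p := p) (fun n => (n:ℚ)⁻¹ ^ 5)
    (fun n => -((n:ℚ)⁻¹ ^ 5)) 1 (by
    intro n h0 h
    obtain ⟨u, v, hu, hv, e1, e2, e⟩ := basic (p := p) h0 h
    simp only [← e1, ← e2]
    refine ⟨u * v * (v^4 - v^3*u+v^2*u^2-v*u^3+u^4), by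
      repeat' first | assumption | exact natCast_mem _ _ | exact ofNat_mem _ _ | exact one_mem _ | apply add_mem | apply sub_mem | apply neg_mem | apply mul_mem | apply pow_mem, ?_⟩
    linear_combination (v^4 - v^3*u+v^2*u^2-v*u^3+u^4)*e)
  refine ⟨r, hr, ?_⟩
  simp only [Finset.sum_neg_distrib] at h
  exact h

lemma SS_shuffle (φ : ℕ → ℚ) : ∑ x ∈ SS p, (x.1:ℚ)⁻¹ * (x.2:ℚ)⁻¹ * φ (x.1 + x.2)
    = 2 * ∑ x ∈ SS p, ((x.1:ℚ) + x.2)⁻¹ * (x.1:ℚ)⁻¹ * φ (x.1 + x.2) := by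
  have h := SS_swap p (fun a b => ((a:ℚ) + b)⁻¹ * (a:ℚ)⁻¹ * φ (a + b))
  rw [two_mul]
  nth_rw 2 [h]
  rw [← Finset.sum_add_distrib]
  refine Finset.sum_congr rfl fun x hx => ?_
  rw [mem_SS] at hx
  have h1 : (x.1 : ℚ) ≠ 0 := by exact_mod_cast hx.1.ne'
  have h2 : (x.2 : ℚ) ≠ 0 := by exact_mod_cast hx.2.1.ne'
  have h3 : (x.1 : ℚ) + x.2 ≠ 0 := by
    have := hx.1; positivity
  rw [add_comm x.2 x.1, add_comm (x.2:ℚ) x.1]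
  field_simp
  ring

/-- triple sums -/
def UU (p a : ℕ) : ℚ :=
  ∑ x ∈ SS p, (x.1:ℚ)⁻¹ * (x.2:ℚ)⁻¹ * ((p - (x.1 + x.2) : ℕ) : ℚ)⁻¹ ^ a

lemma UU_exp1 : ∃ r ∈ pInt p,
    UU p 1 = 2 * (-hh p 2 1 - p * hh p 3 1 - p^2 * hh p 4 1 + p^3 * r) := by
  obtain ⟨r, hr, h⟩ := SS_gen (p := p)
    (fun x => ((x.1:ℚ) + x.2)⁻¹ * (x.1:ℚ)⁻¹ * ((p - (x.1 + x.2) : ℕ) : ℚ)⁻¹ ^ 1)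
    (fun x => -(((x.1:ℚ) + x.2)⁻¹ ^ 2 * (x.1:ℚ)⁻¹ ^ 1) - p * (((x.1:ℚ) + x.2)⁻¹ ^ 3 * (x.1:ℚ)⁻¹ ^ 1)
      - p^2 * (((x.1:ℚ) + x.2)⁻¹ ^ 4 * (x.1:ℚ)⁻¹ ^ 1)) 3 (by
    intro x hx
    rw [mem_SS] at hx
    have hw : (x.1:ℚ)⁻¹ ∈ pInt p := inv_mem_pInt (by omega) (by omega)
    obtain ⟨u, v, hu, hv, e1, e2, e⟩ := basic (p := p) (n := x.1 + x.2) (by omega) (by omega)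
    rw [Nat.cast_add] at e1
    simp only [← e1, ← e2]
    generalize (x.1:ℚ)⁻¹ = w at *
    refine ⟨u^4 * v * w, by
      repeat' first | assumption | exact natCast_mem _ _ | exact ofNat_mem _ _ | exact one_mem _ | apply add_mem | apply sub_mem | apply neg_mem | apply mul_mem | apply pow_mem, ?_⟩
    linear_combination (1+p*u+p^2*u^2)*u*w*e)
  refine ⟨r, hr, ?_⟩
  simp only [Finset.sum_sub_distrib, Finset.sum_neg_distrib, ← Finset.mul_sum] at h
  rw [UU, SS_shuffle (fun n => ((p - n : ℕ) : ℚ)⁻¹ ^ 1), h]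
  rfl

lemma UU_exp2 : ∃ r ∈ pInt p,
    UU p 2 = 2 * (hh p 3 1 + 2 * p * hh p 4 1 + p^2 * r) := by
  obtain ⟨r, hr, h⟩ := SS_gen (p := p)
    (fun x => ((x.1:ℚ) + x.2)⁻¹ * (x.1:ℚ)⁻¹ * ((p - (x.1 + x.2) : ℕ) : ℚ)⁻¹ ^ 2)
    (fun x => (((x.1:ℚ) + x.2)⁻¹ ^ 3 * (x.1:ℚ)⁻¹ ^ 1)
      + 2 * p * (((x.1:ℚ) + x.2)⁻¹ ^ 4 * (x.1:ℚ)⁻¹ ^ 1)) 2 (by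
    intro x hx
    rw [mem_SS] at hx
    have hw : (x.1:ℚ)⁻¹ ∈ pInt p := inv_mem_pInt (by omega) (by omega)
    obtain ⟨u, v, hu, hv, e1, e2, e⟩ := basic (p := p) (n := x.1 + x.2) (by omega) (by omega)
    rw [Nat.cast_add] at e1
    simp only [← e1, ← e2]
    generalize (x.1:ℚ)⁻¹ = w at *
    have e3 : v = -(u+p*u^2) + p^2 * (u^2*v) := by
      linear_combination (1+p*u)*e
    have e4 : v^2 = (-(u+p*u^2) + p^2 * (u^2*v))^2 := by rw [← e3]
    refine ⟨u * w * (u^4 - 2 * (u+p*u^2)*(u^2*v) + p^2 * (u^2*v)^2), by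
      repeat' first | assumption | exact natCast_mem _ _ | exact ofNat_mem _ _ | exact one_mem _ | apply add_mem | apply sub_mem | apply neg_mem | apply mul_mem | apply pow_mem, ?_⟩
    rw [e4]; ring)
  refine ⟨r, hr, ?_⟩
  simp only [Finset.sum_add_distrib, ← Finset.mul_sum] at h
  rw [UU, SS_shuffle (fun n => ((p - n : ℕ) : ℚ)⁻¹ ^ 2), h]
  rfl

lemma pUU (a : ℕ) : p * UU p (a+1) = UU p a
    + 2 * ∑ x ∈ SS p, (x.1:ℚ)⁻¹ * (x.2:ℚ)⁻¹ ^ (a+1) := by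
  have h1 := SS_rot p (fun m k => (m:ℚ)⁻¹ * (k:ℚ)⁻¹ ^ (a+1))
  have h2 := SS_swap p (fun m l => (m:ℚ)⁻¹ * ((p - (m + l) : ℕ):ℚ)⁻¹ ^ (a+1))
  rw [← h1, two_mul]
  nth_rw 2 [h2]
  rw [UU, UU, Finset.mul_sum, ← Finset.sum_add_distrib, ← Finset.sum_add_distrib]
  refine Finset.sum_congr rfl fun x hx => ?_
  rw [mem_SS] at hx
  have h1 : (x.1 : ℚ) ≠ 0 := by exact_mod_cast hx.1.ne'
  have h2 : (x.2 : ℚ) ≠ 0 := by exact_mod_cast hx.2.1.ne'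
  have h3 : ((p - (x.1 + x.2) : ℕ) : ℚ) ≠ 0 := by exact_mod_cast (by omega : p - (x.1 + x.2) ≠ 0)
  have h4 : (p : ℚ) = x.1 + x.2 + ((p - (x.1 + x.2) : ℕ) : ℚ) := by
    exact_mod_cast (by omega : p = x.1 + x.2 + (p - (x.1 + x.2)))
  rw [add_comm x.2 x.1]
  generalize ((p - (x.1 + x.2) : ℕ) : ℚ) = k at *
  rw [h4]
  simp only [pow_succ, inv_pow]
  field_simp
  ring

lemma UU0 : UU p 0 = 2 * hh p 1 1 := by
  rw [UU]
  have := SS_shuffle (p := p) (fun _ => 1)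
  simpa [hh] using this

lemma sum11 : ∑ x ∈ SS p, (x.1:ℚ)⁻¹ * (x.2:ℚ)⁻¹ ^ (0+1) = 2 * hh p 1 1 := by
  have := SS_shuffle (p := p) (fun _ => 1)
  simpa [hh] using this

lemma sum12 : ∑ x ∈ SS p, (x.1:ℚ)⁻¹ * (x.2:ℚ)⁻¹ ^ (1+1) = 2 * hh p 2 1 + hh p 1 2 := by
  have h1 := SS_swap p (fun m l => ((m:ℚ)+l)⁻¹ ^ 2 * (m:ℚ)⁻¹ ^ 1)
  have h2 := SS_swap p (fun m l => ((m:ℚ)+l)⁻¹ ^ 1 * (m:ℚ)⁻¹ ^ 2)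
  unfold hh
  rw [two_mul]
  nth_rw 2 [h1]
  rw [h2, ← Finset.sum_add_distrib, ← Finset.sum_add_distrib]
  refine Finset.sum_congr rfl fun x hx => ?_
  rw [mem_SS] at hx
  have h1 : (x.1 : ℚ) ≠ 0 := by exact_mod_cast hx.1.ne'
  have h2 : (x.2 : ℚ) ≠ 0 := by exact_mod_cast hx.2.1.ne'
  have h3 : (x.1 : ℚ) + x.2 ≠ 0 := by
    have := hx.1; positivity
  rw [add_comm (x.2:ℚ) x.1]
  simp only [pow_succ, pow_zero, one_mul, inv_pow]
  field_simp
  ring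

set_option maxHeartbeats 2000000 in
lemma main_int (hp : 5 ≤ p) : ∃ R ∈ pInt p,
    hx p 1 + (1 / 3) * (p : ℚ) ^ 2 * hh p 2 1 - (1 / 6) * (p : ℚ) ^ 4 * hh p 4 1
      = p ^ 5 * R := by
  obtain ⟨r2, m2, h2⟩ := refl1 (p := p)
  obtain ⟨r3, m3, h3⟩ := refl3 (p := p)
  obtain ⟨r5, m5, h5⟩ := refl5 (p := p)
  obtain ⟨r1, m1, h1⟩ := UU_exp1 (p := p)
  obtain ⟨r6, m6, h6⟩ := UU_exp2 (p := p)
  have a1 := pUU (p := p) 0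
  have a2 := pUU (p := p) 1
  rw [UU0, sum11] at a1
  rw [sum12] at a2
  norm_num at a1 a2
  have s11 := hst p 1 1
  have s12 := hst p 1 2
  norm_num at s11 s12
  have i2 : (1/2 : ℚ) ∈ pInt p := by
    have := inv_mem_pInt (p := p) (n := 2) (by omega) (by omega)
    simpa using this
  have i3 : (1/3 : ℚ) ∈ pInt p := by
    have := inv_mem_pInt (p := p) (n := 3) (by omega) (by omega)
    simpa using this
  have hp0 : (p:ℚ) ≠ 0 := by exact_mod_cast (by omega : p ≠ 0)
  have mx := hx_mem (p := p)
  have mh := hh_mem (p := p)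
  have x2 := mx 2
  have x3 := mx 3
  have x4 := mx 4
  have x5 := mx 5
  have y21 := mh 2 1
  have y31 := mh 3 1
  have y41 := mh 4 1
  clear mx mh
  generalize hx p 1 = X1 at *
  generalize hx p 2 = X2 at *
  generalize hx p 3 = X3 at *
  generalize hx p 4 = X4 at *
  generalize hx p 5 = X5 at *
  generalize hh p 1 1 = H11 at *
  generalize hh p 2 1 = H21 at *
  generalize hh p 1 2 = H12 at *
  generalize hh p 3 1 = H31 at *
  generalize hh p 4 1 = H41 at *
  generalize UU p 1 = U1 at *
  generalize UU p 2 = U2 at *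
  have mP : (p:ℚ) ∈ pInt p := natCast_mem _ _
  generalize (p:ℚ) = P at *
  have mU : U1 ∈ pInt p := by
    rw [h1]
    repeat' first | assumption | exact natCast_mem _ _ | exact ofNat_mem _ _ | exact one_mem _ | apply add_mem | apply sub_mem | apply neg_mem | apply mul_mem | apply pow_mem
  obtain ⟨s, ms, hs⟩ : ∃ s ∈ pInt p, X1 = P * s := by
    refine ⟨(1/2) * (-X2 - P * X3 - P^2 * X4 - P^3 * X5 + P^4 * r2), ?_, ?_⟩
    · repeat' first | assumption | exact natCast_mem _ _ | exact ofNat_mem _ _ | exact one_mem _ | apply add_mem | apply sub_mem | apply neg_mem | apply mul_mem | apply pow_mem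
    · linear_combination (1/2) * h2
  obtain ⟨t, mt, ht⟩ : ∃ t ∈ pInt p, X2 = P * t := by
    refine ⟨P * s^2 - (1/3) * U1, ?_, ?_⟩
    · repeat' first | assumption | exact natCast_mem _ _ | exact ofNat_mem _ _ | exact one_mem _ | apply add_mem | apply sub_mem | apply neg_mem | apply mul_mem | apply pow_mem
    · linear_combination (-1) * s11 + (1/3) * a1 + (X1 + P * s) * hs
  obtain ⟨w, mw, hw⟩ : ∃ w ∈ pInt p, X1 = P^2 * w := by
    refine ⟨(1/2) * (-t - X3 - P * X4 - P^2 * X5 + P^3 * r2), ?_, ?_⟩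
    · repeat' first | assumption | exact natCast_mem _ _ | exact ofNat_mem _ _ | exact one_mem _ | apply add_mem | apply sub_mem | apply neg_mem | apply mul_mem | apply pow_mem
    · linear_combination (1/2) * h2 - (1/2) * P * ht
  refine ⟨(1/2) * ((1/3) * (r1 + r6 + 3 * r2 - r3 - w * t + 3 * ((1/2) * r5) - 3 * w^2)), ?_, ?_⟩
  · repeat' first | assumption | exact natCast_mem _ _ | exact ofNat_mem _ _ | exact one_mem _ | apply add_mem | apply sub_mem | apply neg_mem | apply mul_mem | apply pow_mem
  have k1 : 6 * X1 = P^2 * U1 - 3 * P * X1^2 - 3 * P^2 * X3 - 3 * P^3 * X4 - 3 * P^4 * X5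
      + 3 * P^5 * r2 := by
    linear_combination 3 * h2 + 3 * P * s11 - P * a1
  have k2 : 4 * P * H31 + 6 * P^2 * H41 = -2 * P^3 * r6 + 2 * P^3 * r1 + 2 * (X1 * X2)
      + 3 * P * X4 + 6 * P^2 * X5 - P^3 * r3 := by
    linear_combination a2 - P * h6 + h1 - 2 * s12 - h3
  have k3 : 6 * X1 + 2 * P^2 * H21 - P^4 * H41 = P^5 * (r1 + r6 + 3 * r2 - r3)
      - P^2 * (X1 * X2) + 3 * P^4 * X5 - 3 * P * X1^2 := by
    linear_combination k1 + P^2 * h1 - (3/2) * P^2 * h3 - (1/2) * P^2 * k2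
  have k4 : X1 * X2 = P^3 * (w * t) := by rw [hw, ht]; ring
  have k5 : X1^2 = P^4 * w^2 := by rw [hw]; ring
  linear_combination (1/6) * k3 - (1/6) * P^2 * k4 - (1/2) * P * k5 + (1/4) * P^4 * h5

end

lemma MHS1 (n s : ℕ) : MHS n [s] = ∑ m ∈ Icc 1 n, (m : ℚ)⁻¹ ^ s := by
  simp [MHS]

lemma MHS2 (n s t : ℕ) : MHS n [s, t]
    = ∑ m ∈ Icc 1 n, ∑ k ∈ Icc 1 (m-1), (m : ℚ)⁻¹ ^ s * (k : ℚ)⁻¹ ^ t := by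
  simp [MHS, Finset.mul_sum]

theorem weighted_wolstenholme_mod_p5 (p : ℕ) [Fact p.Prime] (hp : 5 ≤ p) :
    ‖((MHS (p - 1) [1] + (1 / 3) * (p : ℚ) ^ 2 * MHS (p - 1) [2, 1]
        - (1 / 6) * (p : ℚ) ^ 4 * MHS (p - 1) [4, 1] : ℚ) : ℚ_[p])‖
      ≤ (p : ℝ) ^ (-5 : ℤ) := by
  obtain ⟨R, hR, h⟩ := main_int (p := p) hp
  rw [MHS1, MHS2, MHS2, hh_eq, hh_eq]
  change ‖((hx p 1 + (1 / 3) * (p : ℚ) ^ 2 * hh p 2 1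
        - (1 / 6) * (p : ℚ) ^ 4 * hh p 4 1 : ℚ) : ℚ_[p])‖ ≤ _
  rw [h]
  rw [mem_pInt] at hR
  push_cast
  rw [norm_mul, norm_pow, Padic.norm_p]
  have e : ((p:ℝ)⁻¹)^5 = (p : ℝ) ^ (-5 : ℤ) := by
    rw [zpow_neg, inv_pow]; norm_cast
  rw [e]
  exact mul_le_of_le_one_right (by positivity) hR
end

section
/- There exists N such that for every prime p ≥ N, the congruence H_{p−1}(1) + (1/3) p² H_{p−1}(2,1) − (1/6) p⁴ H_{p−1}(4,1) − (1/9) p⁵ H_{p−1}(4,1,1) ≡ 0 (mod p⁶) holds; that is, the p-adic valuation of the left-hand side is at least 6. -/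
namespace WW

section ring
variable {R : Type*} [CommRing R]

/-- Multiple harmonic sums with `x m` in place of `1 / m`. -/
def Hs (x : ℕ → R) : ℕ → List ℕ → R
  | 0, [] => 1
  | 0, _ :: _ => 0
  | _ + 1, [] => 1
  | n + 1, s :: t => Hs x n (s :: t) + x (n + 1) ^ s * Hs x n t

/-- Inner recursion of the stuffle product. -/
def stAux (a : ℕ) (as : List ℕ) (f : List ℕ → List (List ℕ)) : List ℕ → List (List ℕ)
  | [] => [a :: as]
  | b :: bs => (f (b :: bs)).map (fun v => a :: v) ++ (stAux a as f bs).map (fun v => b :: v)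
      ++ (f bs).map (fun v => (a + b) :: v)

/-- Stuffle product of words. -/
def st : List ℕ → List ℕ → List (List ℕ)
  | [] => fun b => [b]
  | a :: as => stAux a as (st as)

/-- Sum of a function over a list. -/
def ls {α : Type*} (f : α → R) (l : List α) : R := (l.map f).sum

@[simp] lemma ls_nil {α : Type*} (f : α → R) : ls f [] = 0 := by simp [ls]
@[simp] lemma ls_cons {α : Type*} (f : α → R) (a : α) (l : List α) :
    ls f (a :: l) = f a + ls f l := by simp [ls]
@[simp] lemma ls_append {α : Type*} (f : α → R) (l m : List α) :
    ls f (l ++ m) = ls f l + ls f m := by simp [ls]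
lemma ls_map {α β : Type*} (f : α → R) (g : β → α) (l : List β) :
    ls f (l.map g) = ls (fun b => f (g b)) l := by simp [ls, Function.comp_def]
lemma ls_add {α : Type*} (f g : α → R) (l : List α) :
    ls (fun a => f a + g a) l = ls f l + ls g l := by
  induction l with
  | nil => simp
  | cons a l ih => simp [ih]; ring
lemma ls_mul {α : Type*} (c : R) (f : α → R) (l : List α) :
    ls (fun a => c * f a) l = c * ls f l := by
  induction l with
  | nil => simp
  | cons a l ih => simp [ih]; ring
lemma ls_zero {α : Type*} (l : List α) : ls (fun _ => (0 : R)) l = 0 := by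
  induction l with
  | nil => simp
  | cons a l ih => simp [ih]
lemma ls_sum {α : Type*} (n : ℕ) (f : ℕ → α → R) (l : List α) :
    ls (fun a => ∑ k ∈ Finset.range n, f k a) l = ∑ k ∈ Finset.range n, ls (f k) l := by
  induction l with
  | nil => simp
  | cons a l ih => simp [ih, Finset.sum_add_distrib]
lemma ls_congr {α : Type*} {f g : α → R} {l : List α} (h : ∀ a ∈ l, f a = g a) :
    ls f l = ls g l := by
  induction l with
  | nil => simp
  | cons a l ih =>
    simp only [List.mem_cons, forall_eq_or_imp] at h
    simp [h.1, ih h.2]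

@[simp] lemma Hs_nil (x : ℕ → R) (n : ℕ) : Hs x n [] = 1 := by cases n <;> rfl
@[simp] lemma Hs_zero (x : ℕ → R) (s : ℕ) (t : List ℕ) : Hs x 0 (s :: t) = 0 := rfl
lemma Hs_succ (x : ℕ → R) (n s : ℕ) (t : List ℕ) :
    Hs x (n + 1) (s :: t) = Hs x n (s :: t) + x (n + 1) ^ s * Hs x n t := rfl

lemma ls_Hs_succ (x : ℕ → R) (n c : ℕ) (l : List (List ℕ)) :
    ls (fun v => Hs x (n + 1) (c :: v)) l
      = ls (fun v => Hs x n (c :: v)) l + x (n + 1) ^ c * ls (Hs x n) l := by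
  simp only [Hs_succ, ls_add, ls_mul]

lemma Hs_mul (x : ℕ → R) (n : ℕ) : ∀ a b, Hs x n a * Hs x n b = ls (Hs x n) (st a b) := by
  induction n with
  | zero =>
    intro a b
    cases a with
    | nil => simp [st]
    | cons a as =>
      cases b with
      | nil => simp [st, stAux]
      | cons b bs => simp [st, stAux, ls_map, ls_zero]
  | succ n ih =>
    intro a b
    cases a with
    | nil => simp [st]
    | cons a as =>
      cases b with
      | nil => simp [st, stAux]
      | cons b bs =>
        have h := ih (a :: as) (b :: bs)
        have h1 := ih as (b :: bs)
        have h2 := ih (a :: as) bs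
        have h3 := ih as bs
        simp only [st, stAux, ls_append, ls_map, ls_Hs_succ] at h h2 ⊢
        rw [← h1, ← h2, ← h3] at *
        rw [Hs_succ, Hs_succ]
        linear_combination h

lemma Hs_smul (x : ℕ → R) (c : R) (n : ℕ) : ∀ v, Hs (fun m => c * x m) n v = c ^ v.sum * Hs x n v := by
  induction n with
  | zero => intro v; cases v <;> simp
  | succ n ih =>
    intro v
    cases v with
    | nil => simp
    | cons s t =>
      rw [Hs_succ, Hs_succ, ih, ih]
      simp only [List.sum_cons]
      ring

lemma Hs_eq_sum (x : ℕ → R) (n s : ℕ) (t : List ℕ) :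
    Hs x n (s :: t) = ∑ m ∈ Finset.range n, x (m + 1) ^ s * Hs x m t := by
  induction n with
  | zero => simp
  | succ n ih => rw [Hs_succ, ih, Finset.sum_range_succ]

lemma Hs_congr (x y : ℕ → R) (n : ℕ) (h : ∀ m, 1 ≤ m → m ≤ n → x m = y m) :
    ∀ v, Hs x n v = Hs y n v := by
  induction n with
  | zero => intro v; cases v <;> simp
  | succ n ih =>
    intro v
    cases v with
    | nil => simp
    | cons s t =>
      have ih' := ih (fun m h1 h2 => h m h1 (by omega))
      rw [Hs_succ, Hs_succ, ih', ih', h (n + 1) (by omega) le_rfl]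

lemma Hs_map {S : Type*} [CommRing S] (f : R →+* S) (x : ℕ → R) (n : ℕ) :
    ∀ v, f (Hs x n v) = Hs (fun m => f (x m)) n v := by
  induction n with
  | zero => intro v; cases v <;> simp
  | succ n ih =>
    intro v
    cases v with
    | nil => simp
    | cons s t => rw [Hs_succ, Hs_succ, ← ih, ← ih]; simp

/-- Star-type summands indexed by binary words. -/
def g (x : ℕ → R) : List Bool → ℕ → R
  | [] => fun k => x k
  | false :: w => fun k => x k * g x w k
  | true :: w => fun k => x k * ∑ m ∈ Finset.range k, g x w (m + 1)

lemma abel (f : ℕ → R) (N : ℕ) :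
    ∑ k ∈ Finset.range (N + 1), (-1) ^ k * ((N + 1).choose (k + 1) : R) * ∑ m ∈ Finset.range (k + 1), f m
      = ∑ k ∈ Finset.range (N + 1), (-1) ^ k * (N.choose k : R) * f k := by
  have h1 : ∑ k ∈ Finset.range (N + 1), (-1) ^ k * (N.choose (k + 1) : R) * ∑ m ∈ Finset.range (k + 1), f m
      = - ∑ k ∈ Finset.range (N + 1), (-1) ^ k * (N.choose k : R) * ∑ m ∈ Finset.range k, f m := by
    rw [Finset.sum_range_succ, Finset.sum_range_succ' (fun k => (-1) ^ k * (N.choose k : R) * ∑ m ∈ Finset.range k, f m)]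
    simp only [Nat.choose_succ_self, Nat.cast_zero, mul_zero, zero_mul, add_zero, Finset.range_zero,
      Finset.sum_empty]
    rw [← Finset.sum_neg_distrib]
    refine Finset.sum_congr rfl fun k _ => ?_
    ring
  have h2 : ∀ k, (-1) ^ k * ((N + 1).choose (k + 1) : R) * ∑ m ∈ Finset.range (k + 1), f m
      = (-1) ^ k * (N.choose (k + 1) : R) * (∑ m ∈ Finset.range (k + 1), f m)
        + ((-1) ^ k * (N.choose k : R) * f k + (-1) ^ k * (N.choose k : R) * ∑ m ∈ Finset.range k, f m) := by
    intro k
    rw [Nat.choose_succ_succ, Finset.sum_range_succ]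
    push_cast
    ring
  simp only [h2]
  rw [Finset.sum_add_distrib, h1, Finset.sum_add_distrib]
  ring

lemma mul_choose (N k : ℕ) : ((N : R) + 1) * (N.choose k : R) = ((N + 1).choose (k + 1) : R) * ((k : R) + 1) := by
  have := Nat.add_one_mul_choose_eq N k
  exact_mod_cast congrArg (Nat.cast : ℕ → R) this

lemma U_to_T (x : ℕ → R) (M : ℕ) (hx : ∀ m, m < M → ((m : R) + 1) * x (m + 1) = 1) (f h : ℕ → R)
    (hU : ∀ N, N < M → ∑ k ∈ Finset.range (N + 1), (-1) ^ k * ((N + 1).choose (k + 1) : R) * (((k : R) + 1) * f k)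
      = ((N : R) + 1) * h N) :
    ∀ N, N ≤ M → ∑ k ∈ Finset.range N, (-1) ^ k * (N.choose (k + 1) : R) * f k
      = ∑ k ∈ Finset.range N, h k := by
  intro N
  induction N with
  | zero => simp
  | succ N ih =>
    intro hN
    have ih := ih (by omega)
    have hU := hU N (by omega)
    have hx := hx N (by omega)
    have key : ∑ k ∈ Finset.range (N + 1), (-1) ^ k * (N.choose k : R) * f k = h N := by
      have : ((N : R) + 1) * ∑ k ∈ Finset.range (N + 1), (-1) ^ k * (N.choose k : R) * f k = ((N : R) + 1) * h N := by
        rw [← hU, Finset.mul_sum]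
        refine Finset.sum_congr rfl fun k _ => ?_
        linear_combination (-1) ^ k * f k * mul_choose (R := R) N k
      linear_combination x (N + 1) * this - (∑ k ∈ Finset.range (N + 1), (-1) ^ k * (N.choose k : R) * f k - h N) * hx
    have e : ∑ k ∈ Finset.range (N + 1), (-1) ^ k * ((N + 1).choose (k + 1) : R) * f k
        = ∑ k ∈ Finset.range (N + 1), (-1) ^ k * (N.choose k : R) * f k
          + ∑ k ∈ Finset.range (N + 1), (-1) ^ k * (N.choose (k + 1) : R) * f k := by
      rw [← Finset.sum_add_distrib]
      refine Finset.sum_congr rfl fun k _ => ?_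
      rw [Nat.choose_succ_succ]; push_cast; ring
    rw [e, key, Finset.sum_range_succ, Finset.sum_range_succ, ih]
    simp
    ring

lemma alt_sum (N : ℕ) : ∑ k ∈ Finset.range (N + 1), (-1) ^ k * ((N + 1).choose (k + 1) : R) = 1 := by
  have h := Int.alternating_sum_range_choose_of_ne (n := N + 1) (by omega)
  have h' := congrArg (Int.cast : ℤ → R) h
  rw [Finset.sum_range_succ'] at h'
  push_cast at h'
  have : ∑ k ∈ Finset.range (N + 1), (-1) ^ k * ((N + 1).choose (k + 1) : R)
    = - ∑ k ∈ Finset.range (N + 1), (-1) ^ (k + 1) * ((N + 1).choose (k + 1) : R) := by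
    rw [← Finset.sum_neg_distrib]
    refine Finset.sum_congr rfl fun k _ => ?_
    ring
  rw [this]
  simp at h'
  linear_combination -h'

/-- Complementary binary word. -/
def du (w : List Bool) : List Bool := w.map not

lemma U_dual (x : ℕ → R) (M : ℕ) (hx : ∀ m, m < M → ((m : R) + 1) * x (m + 1) = 1) (w : List Bool) :
    ∀ N, N < M → ∑ k ∈ Finset.range (N + 1), (-1) ^ k * ((N + 1).choose (k + 1) : R) * (((k : R) + 1) * g x w (k + 1))
      = ((N : R) + 1) * g x (du w) (N + 1) := by
  induction w with
  | nil =>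
    intro N hN
    simp only [g, du, List.map_nil]
    rw [hx N hN]
    refine Eq.trans ?_ (alt_sum (R := R) N)
    refine Finset.sum_congr rfl fun k hk => ?_
    rw [hx k (by have := Finset.mem_range.1 hk; omega), mul_one]
  | cons b w ih =>
    intro N hN
    cases b with
    | false =>
      have hT := U_to_T x M hx (fun k => g x w (k + 1)) (fun k => g x (du w) (k + 1)) ih (N + 1) hN
      have hr : ((N : R) + 1) * g x (du (false :: w)) (N + 1) = ∑ k ∈ Finset.range (N + 1), g x (du w) (k + 1) := by
        simp only [du, List.map_cons, Bool.not_false, g]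
        rw [← mul_assoc, hx N hN, one_mul]
      rw [hr, ← hT]
      refine Finset.sum_congr rfl fun k hk => ?_
      simp only [g]
      rw [← mul_assoc ((k : R) + 1), hx k (by have := Finset.mem_range.1 hk; omega), one_mul]
    | true =>
      have hr : ((N : R) + 1) * g x (du (true :: w)) (N + 1) = g x (du w) (N + 1) := by
        simp only [du, List.map_cons, Bool.not_true, g]
        rw [← mul_assoc, hx N hN, one_mul]
      have e : ∑ k ∈ Finset.range (N + 1), (-1) ^ k * ((N + 1).choose (k + 1) : R) * (((k : R) + 1) * g x (true :: w) (k + 1))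
         = ∑ k ∈ Finset.range (N + 1), (-1) ^ k * ((N + 1).choose (k + 1) : R) * ∑ m ∈ Finset.range (k + 1), g x w (m + 1) := by
        refine Finset.sum_congr rfl fun k hk => ?_
        simp only [g]
        rw [← mul_assoc ((k : R) + 1), hx k (by have := Finset.mem_range.1 hk; omega), one_mul]
      rw [hr, e, abel (fun m => g x w (m + 1))]
      have hU := ih N hN
      have : ((N : R) + 1) * ∑ k ∈ Finset.range (N + 1), (-1) ^ k * (N.choose k : R) * g x w (k + 1)
          = ((N : R) + 1) * g x (du w) (N + 1) := by
        rw [← hU, Finset.mul_sum]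
        refine Finset.sum_congr rfl fun k _ => ?_
        linear_combination (-1) ^ k * g x w (k + 1) * mul_choose (R := R) N k
      linear_combination x (N + 1) * this
        - (∑ k ∈ Finset.range (N + 1), (-1) ^ k * (N.choose k : R) * g x w (k + 1) - g x (du w) (N + 1)) * hx N hN

lemma T_dual (x : ℕ → R) (M : ℕ) (hx : ∀ m, m < M → ((m : R) + 1) * x (m + 1) = 1) (w : List Bool) :
    ∑ k ∈ Finset.range M, (-1) ^ k * (M.choose (k + 1) : R) * g x w (k + 1)
      = ∑ k ∈ Finset.range M, g x (du w) (k + 1) :=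
  U_to_T x M hx (fun k => g x w (k + 1)) (fun k => g x (du w) (k + 1)) (U_dual x M hx w) M le_rfl

lemma g_smul (x : ℕ → R) (c : R) (w : List Bool) :
    ∀ k, g (fun m => c * x m) w k = c ^ (w.length + 1) * g x w k := by
  induction w with
  | nil => intro k; simp [g]
  | cons b w ih =>
    intro k
    cases b with
    | false => simp only [g, ih, List.length_cons]; ring
    | true => simp only [g, ih, List.length_cons, ← Finset.mul_sum]; ring

/-- Words of the expansion of `g`. -/
def Lw : List Bool → List (ℕ × List ℕ)
  | [] => [(1, [])]
  | false :: w => (Lw w).map (fun u => (u.1 + 1, u.2))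
  | true :: w => (Lw w).map (fun u => (1, u.1 :: u.2)) ++ (Lw w).map (fun u => (u.1 + 1, u.2))

lemma g_eq (x : ℕ → R) (w : List Bool) : ∀ k, g x w (k + 1) = ls (fun u => x (k + 1) ^ u.1 * Hs x k u.2) (Lw w) := by
  induction w with
  | nil => intro k; simp [g, Lw]
  | cons b w ih =>
    intro k
    have e2 : x (k + 1) * g x w (k + 1) = ls (fun u => x (k + 1) ^ (u.1 + 1) * Hs x k u.2) (Lw w) := by
      rw [ih, ← ls_mul]
      congr 1; funext u; ring
    cases b with
    | false =>
      simp only [g, Lw, ls_map]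
      exact e2
    | true =>
      simp only [g, Lw, ls_map, ls_append]
      rw [Finset.sum_range_succ, mul_add, e2]
      congr 1
      rw [ls_mul, pow_one]
      congr 1
      rw [Finset.sum_congr rfl (fun m _ => ih m), ← ls_sum]
      congr 1; funext u
      rw [Hs_eq_sum]

/-- Multiplication of a summand by a full harmonic sum. -/
def tm (u : ℕ × List ℕ) (b : List ℕ) : List (List ℕ) :=
  (st u.2 b).map (fun v => u.1 :: v) ++
    (match b with
      | [] => []
      | c :: b' => (st u.2 b').map (fun v => (u.1 + c) :: v))

lemma tm_eq (x : ℕ → R) (n : ℕ) (u : ℕ × List ℕ) (b : List ℕ) :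
    ∑ k ∈ Finset.range n, x (k + 1) ^ u.1 * Hs x k u.2 * Hs x (k + 1) b = ls (Hs x n) (tm u b) := by
  cases b with
  | nil => simp only [tm, Hs_nil, mul_one, ls_append, ls_nil, add_zero, ls_map, Hs_eq_sum, ls_sum, ls_mul, ← Hs_mul]
  | cons c b =>
    simp only [tm, ls_append, ls_map, Hs_eq_sum x n, ls_sum, ls_mul, ← Hs_mul]
    rw [← Finset.sum_add_distrib]
    refine Finset.sum_congr rfl fun k _ => ?_
    rw [Hs_succ]; ring

lemma choose_eq (x : ℕ → R) (p : ℕ) (hx : ∀ m, m < p - 1 → ((m : R) + 1) * x (m + 1) = 1) (hp7 : (p : R) ^ 7 = 0) :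
    ∀ k, k ≤ p - 1 → ∑ i ∈ Finset.range 7, (-1) ^ i * Hs (fun m => (p : R) * x m) k (List.replicate i 1)
      = (-1) ^ k * ((p - 1).choose k : R) := by
  intro k
  induction k with
  | zero => intro _; simp [Finset.sum_range_succ, List.replicate]
  | succ k ih =>
    intro hk
    have ih := ih (by omega)
    have h6 : (p : R) * x (k + 1) * Hs (fun m => (p : R) * x m) k (List.replicate 6 1) = 0 := by
      rw [Hs_smul]
      simp only [List.sum_replicate, smul_eq_mul, mul_one]
      linear_combination x (k + 1) * Hs x k (List.replicate 6 1) * hp7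
    have hc : ((k : R) + 1) * ((p - 1).choose (k + 1) : R) = ((p : R) - (k + 1)) * ((p - 1).choose k : R) := by
      have h := Nat.choose_succ_right_eq (p - 1) k
      have h' := congrArg (Nat.cast : ℕ → R) h
      push_cast at h'
      rw [show p - 1 - k = p - (k + 1) by omega, Nat.cast_sub (by omega : k + 1 ≤ p)] at h'
      push_cast at h'
      linear_combination h'
    have hxk := hx k (by omega)
    simp only [Finset.sum_range_succ, Finset.sum_range_zero, List.replicate, Hs_succ, Hs_nil] at ih h6 ⊢
    linear_combination (1 - (p : R) * x (k + 1)) * ih + h6 - (-1) ^ (k + 1) * x (k + 1) * hc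
      - (-1) ^ k * (((p - 1).choose (k + 1) : R) + (p - 1).choose k) * hxk

/-- A formal linear combination. -/
abbrev LC := List (ℤ × List ℕ)

/-- Evaluation of a formal linear combination. -/
def ev (y : ℕ → R) (n : ℕ) (l : LC) : R := ls (fun e => (e.1 : R) * Hs y n e.2) l

/-- Scaling. -/
def sc (c : ℤ) (l : List (List ℕ)) : LC := l.map (fun v => (c, v))

lemma ev_sc (y : ℕ → R) (n : ℕ) (c : ℤ) (l : List (List ℕ)) : ev y n (sc c l) = c * ls (Hs y n) l := by
  simp only [ev, sc, ls_map, ls_mul]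

lemma ev_append (y : ℕ → R) (n : ℕ) (l m : LC) : ev y n (l ++ m) = ev y n l + ev y n m := by
  simp [ev]

lemma ev_flatMap {α : Type*} (y : ℕ → R) (n : ℕ) (f : α → LC) (l : List α) :
    ev y n (l.flatMap f) = ls (fun a => ev y n (f a)) l := by
  induction l with
  | nil => simp [ev]
  | cons a l ih => simp [ev_append, ih]

/-- The duality relation attached to a binary word. -/
def Rel (w : List Bool) : LC :=
  sc 1 ((Lw (du w)).map (fun u => u.1 :: u.2)) ++
    (List.range (6 - w.length)).flatMap
      (fun i => sc ((-1) ^ i) ((Lw w).flatMap (fun u => tm u (List.replicate i 1))))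

lemma ls_range (f : ℕ → R) (n : ℕ) : ls f (List.range n) = ∑ i ∈ Finset.range n, f i := by
  induction n with
  | zero => simp
  | succ n ih => rw [List.range_succ, ls_append, ih, Finset.sum_range_succ]; simp

lemma ls_flatMap {α β : Type*} (f : β → R) (h : α → List β) (l : List α) :
    ls f (l.flatMap h) = ls (fun a => ls f (h a)) l := by
  induction l with
  | nil => simp
  | cons a l ih => simp [ih]

lemma Rel_zero (x : ℕ → R) (p : ℕ) (hx : ∀ m, m < p - 1 → ((m : R) + 1) * x (m + 1) = 1) (hp7 : (p : R) ^ 7 = 0)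
    (w : List Bool) : ev (fun m => (p : R) * x m) (p - 1) (Rel w) = 0 := by
  have hT := T_dual x (p - 1) hx w
  have hA := choose_eq x p hx hp7
  set y : ℕ → R := fun m => (p : R) * x m with hy
  have hT' : ∑ k ∈ Finset.range (p - 1), g y (du w) (k + 1)
      + ∑ k ∈ Finset.range (p - 1), (-1) ^ (k + 1) * ((p - 1).choose (k + 1) : R) * g y w (k + 1) = 0 := by
    simp only [hy, g_smul]
    have hl : (du w).length = w.length := by simp [du]
    rw [hl, ← Finset.mul_sum, ← hT, Finset.mul_sum, ← Finset.sum_add_distrib]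
    refine Finset.sum_eq_zero fun k _ => ?_
    ring
  have h1 : ls (fun u : ℕ × List ℕ => Hs y (p - 1) (u.1 :: u.2)) (Lw (du w))
      = ∑ k ∈ Finset.range (p - 1), g y (du w) (k + 1) := by
    simp only [Hs_eq_sum, ls_sum, g_eq]
  have h2 : ∀ i, ls (fun u => ls (Hs y (p - 1)) (tm u (List.replicate i 1))) (Lw w)
      = ∑ k ∈ Finset.range (p - 1), Hs y (k + 1) (List.replicate i 1) * g y w (k + 1) := by
    intro i
    simp only [← tm_eq, ls_sum, g_eq, ← ls_mul]
    refine Finset.sum_congr rfl fun k _ => ?_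
    congr 1; funext u; ring
  have hz : ∀ i k, 6 - w.length ≤ i → Hs y (k + 1) (List.replicate i 1) * g y w (k + 1) = 0 := by
    intro i k hi
    rw [hy, Hs_smul, g_smul]
    simp only [List.sum_replicate, smul_eq_mul, mul_one]
    obtain ⟨j, hj⟩ : ∃ j, i + (w.length + 1) = 7 + j := ⟨i + (w.length + 1) - 7, by omega⟩
    have : (p : R) ^ i * (p : R) ^ (w.length + 1) = 0 := by
      rw [← pow_add, hj, pow_add, hp7, zero_mul]
    linear_combination (Hs x (k + 1) (List.replicate i 1) * g x w (k + 1)) * this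
  rw [Rel, ev_append, ev_sc, ev_flatMap, ls_range, ls_map, h1]
  simp only [ev_sc, ls_flatMap, h2]
  have h3 : ∑ i ∈ Finset.range (6 - w.length), (((-1) ^ i : ℤ) : R) *
        ∑ k ∈ Finset.range (p - 1), Hs y (k + 1) (List.replicate i 1) * g y w (k + 1)
      = ∑ i ∈ Finset.range 7, (((-1) ^ i : ℤ) : R) *
        ∑ k ∈ Finset.range (p - 1), Hs y (k + 1) (List.replicate i 1) * g y w (k + 1) := by
    refine Finset.sum_subset (fun i hi => ?_) (fun i _ hi => ?_)
    · simp only [Finset.mem_range] at *; omega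
    · simp only [Finset.mem_range, not_lt] at hi
      rw [Finset.sum_eq_zero (fun k _ => hz i k hi), mul_zero]
  rw [h3, ← hT']
  push_cast
  rw [one_mul]
  congr 1
  simp only [Finset.mul_sum]
  rw [Finset.sum_comm]
  refine Finset.sum_congr rfl fun k hk => ?_
  rw [← hA (k + 1) (by have := Finset.mem_range.1 hk; omega), Finset.sum_mul]
  refine Finset.sum_congr rfl fun i _ => ?_
  ring

/-- Multiply a combination by an integer and a word, dropping weights above six. -/
def mulW (c : ℤ) (d : List ℕ) (l : LC) : LC :=
  l.flatMap (fun e => if e.2.sum + d.sum ≤ 6 then sc (c * e.1) (st e.2 d) else [])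

lemma Hs_big (x : ℕ → R) (p : R) (hp7 : p ^ 7 = 0) (n : ℕ) (v : List ℕ) (hv : 7 ≤ v.sum) :
    Hs (fun m => p * x m) n v = 0 := by
  rw [Hs_smul]
  obtain ⟨j, hj⟩ := Nat.exists_eq_add_of_le hv
  rw [hj, pow_add, hp7, zero_mul, zero_mul]

lemma ev_mulW (x : ℕ → R) (p : R) (hp7 : p ^ 7 = 0) (n : ℕ) (c : ℤ) (d : List ℕ) (l : LC) :
    ev (fun m => p * x m) n (mulW c d l)
      = c * Hs (fun m => p * x m) n d * ev (fun m => p * x m) n l := by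
  rw [mulW, ev_flatMap]
  conv_rhs => rw [ev, ← ls_mul]
  congr 1; funext e
  split_ifs with h
  · rw [ev_sc, ← Hs_mul]; push_cast; ring
  · rw [Hs_smul, Hs_smul]
    obtain ⟨j, hj⟩ : ∃ j, e.2.sum + d.sum = 7 + j := ⟨e.2.sum + d.sum - 7, by omega⟩
    have : p ^ e.2.sum * p ^ d.sum = 0 := by
      rw [← pow_add, hj, pow_add, hp7, zero_mul]
    simp only [ev, ls_nil]
    linear_combination -(c * e.1 * Hs x n e.2 * Hs x n d : R) * this

/-- Insert a term into an association list. -/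
def ins (c : ℤ) (v : List ℕ) : LC → LC
  | [] => [(c, v)]
  | e :: l => if e.2 = v then (e.1 + c, v) :: l else e :: ins c v l

lemma ev_ins (y : ℕ → R) (n : ℕ) (c : ℤ) (v : List ℕ) (l : LC) :
    ev y n (ins c v l) = c * Hs y n v + ev y n l := by
  induction l with
  | nil => simp [ins, ev]
  | cons e l ih =>
    simp only [ins]
    split_ifs with h
    · subst h; simp [ev]; ring
    · simp only [ev, ls_cons] at ih ⊢
      rw [ih]; ring

/-- Collect terms. -/
def nf (l : LC) : LC := l.foldr (fun e acc => ins e.1 e.2 acc) []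

lemma ev_nf (y : ℕ → R) (n : ℕ) (l : LC) : ev y n (nf l) = ev y n l := by
  induction l with
  | nil => simp [nf]
  | cons e l ih =>
    have : nf (e :: l) = ins e.1 e.2 (nf l) := rfl
    rw [this, ev_ins, ih]; simp [ev]

/-- Are all coefficients zero? -/
def allz (l : LC) : Bool := l.all (fun e => e.1 == 0)

lemma ev_allz (y : ℕ → R) (n : ℕ) (l : LC) (h : allz l = true) : ev y n l = 0 := by
  have : ∀ e ∈ l, e.1 = 0 := by simpa [allz] using h
  rw [ev, ← ls_zero (R := R) l]
  exact ls_congr fun e he => by simp [this e he]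

end ring

/-- The scaling constant of the certificate. -/
def DD : ℕ := 2016

/-- The certificate. -/
def cert : List (ℤ × List Bool × List ℕ) :=
  [(18144, [], []),
   (-6741, [], [2, 1, 1, 1]),
   (6048, [false], []),
   (126, [], [1, 1, 1, 2]),
   (30104, [false, false, true, false, true], []),
   (11320, [], [1, 4]),
   (-41454, [true, true, true, false, false], []),
   (19115, [], [5]),
   (-19896, [true, false], [3]),
   (9163, [], [1, 1, 3]),
   (15610, [true, true, false, false, true], []),
   (2616, [], [3, 2]),
   (-16422, [true, false], [2, 1]),
   (-2192, [true], [4]),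
   (11978, [], [4, 1]),
   (315, [], [3, 1, 1]),
   (-7560, [false, false], []),
   (-1096, [false, true, false, true, false], []),
   (2268, [false, false, false], []),
   (-3024, [false, false, false, false], []),
   (2016, [false, false, false, true], []),
   (-24024, [false, true, false, false], []),
   (13766, [true, false, true, false, false], []),
   (6418, [], [2, 2, 1]),
   (2233, [], [1, 3, 1]),
   (1294, [], [1, 2, 2]),
   (22055, [], [2, 3]),
   (-29354, [false, true, true, true, false], []),
   (-17976, [false, false, true, false], []),
   (1596, [false, false, true, true], []),
   (45682, [false, true, true, false, false], []),
   (7664, [], [2, 1, 2]),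
   (5184, [true, false, true], [2]),
   (6426, [true], [1, 2, 1]),
   (20160, [true, false, false, false], []),
   (19320, [true, false, true, false], []),
   (13356, [true, false, false, true], []),
   (-20244, [false, true, true, false, true], []),
   (4956, [], [1, 2, 1, 1]),
   (4452, [false], [3]),
   (-10374, [], [4]),
   (-14, [false], [1, 3]),
   (-4368, [false, true], [2]),
   (2772, [], [1, 2, 1]),
   (336, [], [2, 1, 1]),
   (-168, [], [1, 3]),
   (2898, [false], [2]),
   (-504, [false], [1]),
   (-10206, [true, false, true], []),
   (-13314, [true, true, false, true, true], []),
   (8568, [false, true], []),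
   (630, [false], [1, 1]),
   (-6678, [false, false, true], []),
   (13986, [false, true, true], []),
   (-1344, [true, false, true, true, false], []),
   (-672, [false], [2, 1]),
   (1512, [true, false], []),
   (2520, [], [2]),
   (3024, [], [1])]

/-- The combination of relations given by the certificate. -/
def comb : LC := cert.flatMap (fun e => mulW e.1 e.2.2 (Rel e.2.1))

/-- The target. -/
def tgt : LC := [(18, [1]), (6, [2, 1]), (-3, [4, 1]), (-2, [4, 1, 1])]

set_option maxRecDepth 100000 in
lemma check : allz (nf (mulW (-(DD : ℤ)) [] tgt ++ comb)) = true := by decide +kernel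

lemma target_zero {R : Type*} [CommRing R] (x : ℕ → R) (p : ℕ)
    (hx : ∀ m, m < p - 1 → ((m : R) + 1) * x (m + 1) = 1) (hp7 : (p : R) ^ 7 = 0) :
    (DD : R) * (p * (18 * Hs x (p - 1) [1] + 6 * p ^ 2 * Hs x (p - 1) [2, 1]
      - 3 * p ^ 4 * Hs x (p - 1) [4, 1] - 2 * p ^ 5 * Hs x (p - 1) [4, 1, 1])) = 0 := by
  have h := ev_allz (fun m => (p : R) * x m) (p - 1) _ check
  have hc : ev (fun m => (p : R) * x m) (p - 1) comb = 0 := by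
    rw [comb, ev_flatMap, ← ls_zero (R := R) cert]
    refine ls_congr fun e _ => ?_
    rw [ev_mulW x p hp7, Rel_zero x p hx hp7, mul_zero]
  rw [ev_nf, ev_append, hc, ev_mulW x p hp7] at h
  simp [ev, tgt, Hs_smul] at h
  linear_combination h

lemma MHS_eq (n : ℕ) (v : List ℕ) : MHS n v = Hs (fun m => (1 / (m : ℚ))) n v := by
  induction v generalizing n with
  | nil => simp [MHS]
  | cons s t ih =>
    rw [MHS, Hs_eq_sum, ← Finset.Ico_add_one_right_eq_Icc, Finset.sum_Ico_eq_sum_range]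
    refine Finset.sum_congr (by simp) fun m _ => ?_
    rw [ih]
    simp [add_comm]

end WW

/-- There exists `N` such that for every prime `p ≥ N`, the `p`-adic valuation of
`H_{p-1}(1) + (1/3) p² H_{p-1}(2,1) - (1/6) p⁴ H_{p-1}(4,1) - (1/9) p⁵ H_{p-1}(4,1,1)`
is at least `6`. -/
theorem weighted_wolstenholme_mod_p6 :
    ∃ N : ℕ, ∀ p : ℕ, (hp : p.Prime) → N ≤ p →
      haveI : Fact p.Prime := ⟨hp⟩
      ‖((MHS (p - 1) [1] + (1 / 3) * (p : ℚ) ^ 2 * MHS (p - 1) [2, 1]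
          - (1 / 6) * (p : ℚ) ^ 4 * MHS (p - 1) [4, 1]
          - (1 / 9) * (p : ℚ) ^ 5 * MHS (p - 1) [4, 1, 1] : ℚ) : ℚ_[p])‖
        ≤ (p : ℝ) ^ (-6 : ℤ) := by
  refine ⟨18 * WW.DD + 1, fun p hp hN => ?_⟩
  have : Fact p.Prime := ⟨hp⟩
  have hu : ∀ m : ℕ, m < p - 1 → IsUnit ((m : ℤ_[p]) + 1) := by
    intro m hm
    have : ((m : ℤ_[p]) + 1) = ((m + 1 : ℕ) : ℤ_[p]) := by push_cast; ring
    rw [this, PadicInt.isUnit_iff, PadicInt.norm_natCast_eq_one_iff]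
    exact (Nat.coprime_of_lt_prime (by omega) (by omega) hp)
  set X : ℕ → ℤ_[p] := fun m => Ring.inverse (m : ℤ_[p]) with hX
  have hX1 : ∀ m, m < p - 1 → ((m : ℤ_[p]) + 1) * X (m + 1) = 1 := by
    intro m hm
    have := Ring.mul_inverse_cancel _ (hu m hm)
    simpa [hX] using this
  let I : Ideal ℤ_[p] := Ideal.span {(p : ℤ_[p]) ^ 7}
  let q := Ideal.Quotient.mk I
  have ht := WW.target_zero (fun m => q (X m)) p
    (fun m hm => by have := congrArg q (hX1 m hm); simpa using this)
    (by
      have : q ((p : ℤ_[p]) ^ 7) = 0 := Ideal.Quotient.eq_zero_iff_mem.2 (Ideal.mem_span_singleton_self _)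
      simpa using this)
  simp only [← WW.Hs_map q X] at ht
  set Y : ℤ_[p] := (WW.DD : ℤ_[p]) * (p * (18 * WW.Hs X (p - 1) [1] + 6 * p ^ 2 * WW.Hs X (p - 1) [2, 1]
      - 3 * p ^ 4 * WW.Hs X (p - 1) [4, 1] - 2 * p ^ 5 * WW.Hs X (p - 1) [4, 1, 1])) with hY
  have hqY : q Y = 0 := by
    rw [hY]
    simp only [map_mul, map_add, map_sub, map_pow, map_natCast, map_ofNat]
    exact ht
  have hmem : Y ∈ I := Ideal.Quotient.eq_zero_iff_mem.1 hqY
  have hnorm : ‖Y‖ ≤ (p : ℝ) ^ (-(7 : ℕ) : ℤ) := (PadicInt.norm_le_pow_iff_mem_span_pow Y 7).2 hmem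
  have hcast : ∀ v, ((WW.Hs X (p - 1) v : ℤ_[p]) : ℚ_[p]) = ((MHS (p - 1) v : ℚ) : ℚ_[p]) := by
    intro v
    rw [WW.MHS_eq]
    have e1 := WW.Hs_map (PadicInt.Coe.ringHom (p := p)) X (p - 1) v
    have e2 := WW.Hs_map (Rat.castHom ℚ_[p]) (fun m => (1 / (m : ℚ))) (p - 1) v
    have e1' : ((WW.Hs X (p - 1) v : ℤ_[p]) : ℚ_[p]) = WW.Hs (fun m => ((X m : ℤ_[p]) : ℚ_[p])) (p - 1) v := e1
    have e2' : ((WW.Hs (fun m => (1 / (m : ℚ))) (p - 1) v : ℚ) : ℚ_[p])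
      = WW.Hs (fun m : ℕ => ((1 / (m : ℚ) : ℚ) : ℚ_[p])) (p - 1) v := e2
    rw [e1', e2']
    apply WW.Hs_congr
    intro m h1 h2
    obtain ⟨k, rfl⟩ : ∃ k, m = k + 1 := ⟨m - 1, by omega⟩
    have := congrArg (fun z : ℤ_[p] => (z : ℚ_[p])) (hX1 k (by omega))
    push_cast at this ⊢
    rw [one_div]
    exact eq_inv_of_mul_eq_one_right this
  set T : ℚ := (MHS (p - 1) [1] + (1 / 3) * (p : ℚ) ^ 2 * MHS (p - 1) [2, 1]
          - (1 / 6) * (p : ℚ) ^ 4 * MHS (p - 1) [4, 1]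
          - (1 / 9) * (p : ℚ) ^ 5 * MHS (p - 1) [4, 1, 1]) with hT
  have hYT : ((Y : ℤ_[p]) : ℚ_[p]) = ((18 * WW.DD : ℕ) : ℚ_[p]) * ((p : ℚ_[p]) * (T : ℚ_[p])) := by
    rw [hY, hT]
    have h18 : ((18 : ℤ_[p]) : ℚ_[p]) = 18 := rfl
    have h6 : ((6 : ℤ_[p]) : ℚ_[p]) = 6 := rfl
    have h3 : ((3 : ℤ_[p]) : ℚ_[p]) = 3 := rfl
    have h2 : ((2 : ℤ_[p]) : ℚ_[p]) = 2 := rfl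
    push_cast
    simp only [hcast, h18, h6, h3, h2]
    ring
  have hD : ‖((18 * WW.DD : ℕ) : ℚ_[p])‖ = 1 := by
    rw [Padic.norm_natCast_eq_one_iff]
    exact (Nat.coprime_of_lt_prime (by decide) (by omega) hp)
  rw [PadicInt.norm_def, hYT, norm_mul, norm_mul, hD, one_mul, Padic.norm_p] at hnorm
  have hp0 : (0 : ℝ) < p := by exact_mod_cast hp.pos
  have : ‖(T : ℚ_[p])‖ = p * ((p : ℝ)⁻¹ * ‖(T : ℚ_[p])‖) := by field_simp
  rw [this]
  calc (p : ℝ) * ((p : ℝ)⁻¹ * ‖(T : ℚ_[p])‖) ≤ p * (p : ℝ) ^ (-(7 : ℕ) : ℤ) := by gcongr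
    _ = (p : ℝ) ^ (-6 : ℤ) := by
      rw [← zpow_one_add₀ hp0.ne']; norm_num
end

section
/- There exists N such that for every prime p ≥ N, the homogeneous weighted congruence 3 H_{p−1}(1,4) − H_{p−1}(2,3) − H_{p−1}(3,2) + 3 H_{p−1}(4,1) + 2 H_{p−1}(5) ≡ 0 (mod p⁵) holds; that is, the p-adic valuation of the left-hand side is at least 5. -/
theorem mhs_one (n s : ℕ) : MHS n [s] = ∑ m ∈ Finset.Icc 1 n, (1 / (m : ℚ) ^ s) := by
  simp [MHS]

theorem mhs_stuffle (n a b : ℕ) :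
    MHS n [a, b] + MHS n [b, a] = MHS n [a] * MHS n [b] - MHS n [a + b] := by
  induction n with
  | zero => simp [MHS]
  | succ n ih =>
    have h2 : ∀ a b : ℕ, MHS (n+1) [a, b]
        = MHS n [a, b] + (1 / ((n + 1 : ℕ) : ℚ) ^ a) * MHS n [b] := by
      intro a b
      rw [MHS, MHS, Finset.sum_Icc_succ_top (by omega)]
      simp
    have h1 : ∀ a : ℕ, MHS (n+1) [a] = MHS n [a] + (1 / ((n + 1 : ℕ) : ℚ) ^ a) := by
      intro a
      rw [mhs_one, mhs_one, Finset.sum_Icc_succ_top (by omega)]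
    rw [h2, h2, h1, h1, h1, pow_add, one_div_mul_eq_div, one_div_mul_eq_div]
    field_simp
    linear_combination ((n + 1 : ℕ) : ℚ) ^ a * ((n + 1 : ℕ) : ℚ) ^ b * ih

theorem zmod_sum (p s : ℕ) [Fact p.Prime] (hs : 0 < s) (hsp : s < p - 1) :
    ∑ k ∈ Finset.Icc 1 (p - 1), ((k : ZMod p)⁻¹) ^ s = 0 := by
  have hp : p.Prime := Fact.out
  have h0 : ∑ a : ZMod p, a ^ s = 0 :=
    FiniteField.sum_pow_lt_card_sub_one (ZMod p) s (by rwa [ZMod.card])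
  have h1 : ∑ a : ZMod p, (a⁻¹) ^ s = 0 := by
    rw [← h0]
    exact Function.Involutive.bijective (f := fun a : ZMod p => a⁻¹) (fun a => inv_inv a)
      |>.sum_comp (fun a => a ^ s)
  have h2 : ∑ a ∈ Finset.univ.erase (0 : ZMod p), (a⁻¹) ^ s = 0 := by
    rw [← Finset.add_sum_erase _ _ (Finset.mem_univ (0 : ZMod p)), inv_zero,
      zero_pow hs.ne', zero_add] at h1
    exact h1
  rw [← h2]
  refine Finset.sum_nbij' (fun k => (k : ZMod p)) (fun a => a.val) ?_ ?_ ?_ ?_ ?_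
  · intro k hk
    rw [Finset.mem_Icc] at hk
    simp only [Finset.mem_erase, Finset.mem_univ, and_true]
    rw [Ne, ZMod.natCast_eq_zero_iff]
    exact fun h => by have := Nat.le_of_dvd (by omega) h; omega
  · intro a ha
    simp only [Finset.mem_erase, Finset.mem_univ, and_true] at ha
    have := ZMod.val_lt a
    have := (ZMod.val_ne_zero a).2 ha
    rw [Finset.mem_Icc]; omega
  · intro k hk
    rw [Finset.mem_Icc] at hk
    exact ZMod.val_cast_of_lt (by omega)
  · intro a _
    exact ZMod.natCast_zmod_val a
  · intro k _; rfl

theorem key (p : ℕ) [Fact p.Prime] (hp11 : 11 ≤ p) (x : ℕ → ℤ_[p])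
    (hx : ∀ k ∈ Finset.Icc 1 (p - 1), (k : ℤ_[p]) * x k = 1) (h : ℕ → ℤ_[p])
    (hh : ∀ s, h s = ∑ k ∈ Finset.Icc 1 (p - 1), x k ^ s) :
    (p : ℤ_[p]) ^ 5 ∣ 3 * h 1 * h 4 - h 2 * h 3 := by
  have hp : p.Prime := Fact.out
  have hd : ∀ s, 0 < s → s < p - 1 → (p : ℤ_[p]) ∣ h s := by
    intro s hs hsp
    rw [← Ideal.mem_span_singleton, ← PadicInt.maximalIdeal_eq_span_p, ← PadicInt.ker_toZMod,
      RingHom.mem_ker, hh, map_sum, ← zmod_sum p s hs hsp]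
    refine Finset.sum_congr rfl fun k hk => ?_
    rw [map_pow]
    congr 1
    apply eq_inv_of_mul_eq_one_right
    have := congrArg PadicInt.toZMod (hx k hk)
    simpa using this
  have hrev : ∀ s, h s = ∑ k ∈ Finset.Icc 1 (p - 1), x (p - k) ^ s := by
    intro s
    rw [hh]
    refine Finset.sum_nbij' (fun k => p - k) (fun k => p - k) ?_ ?_ ?_ ?_ ?_
    all_goals intro k hk
    all_goals rw [Finset.mem_Icc] at hk
    · rw [Finset.mem_Icc]; omega
    · rw [Finset.mem_Icc]; omega
    · show p - (p - k) = k
      omega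
    · show p - (p - k) = k
      omega
    · show x k ^ s = x (p - (p - k)) ^ s
      rw [show p - (p - k) = k by omega]
  have hxy : ∀ k ∈ Finset.Icc 1 (p - 1), x (p - k) = - x k + p * x k * x (p - k) := by
    intro k hk
    have h1 := hx k hk
    rw [Finset.mem_Icc] at hk
    have h2 := hx (p - k) (by rw [Finset.mem_Icc]; omega)
    rw [Nat.cast_sub (by omega)] at h2
    linear_combination x (p - k) * (- h1) - x k * h2
  have r1 : (p : ℤ_[p]) ^ 4 ∣ 2 * h 1 + p * h 2 + p ^ 2 * h 3 + p ^ 3 * h 4 := by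
    have : 2 * h 1 + p * h 2 + p ^ 2 * h 3 + p ^ 3 * h 4 = ∑ k ∈ Finset.Icc 1 (p - 1),
        (x (p - k) ^ 1 + x k ^ 1 + p * x k ^ 2 + p ^ 2 * x k ^ 3 + p ^ 3 * x k ^ 4) := by
      simp only [Finset.sum_add_distrib, ← Finset.mul_sum, ← hh, ← hrev]
      ring
    rw [this]
    refine Finset.dvd_sum fun k hk => ?_
    have e := hxy k hk
    generalize x (p - k) = y at *
    generalize x k = x at *
    refine ⟨x ^ 4 * y, ?_⟩
    linear_combination (1 + p * x + p ^ 2 * x ^ 2 + p ^ 3 * x ^ 3) * e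
  have e4 : ∀ k ∈ Finset.Icc 1 (p - 1), x (p - k) = - x k - p * x k ^ 2 - p ^ 2 * x k ^ 3
      - p ^ 3 * x k ^ 4 + p ^ 4 * (x k ^ 4 * x (p - k)) := by
    intro k hk
    have e := hxy k hk
    linear_combination (1 + p * x k + p ^ 2 * x k ^ 2 + p ^ 3 * x k ^ 3) * e
  have r3 : (p : ℤ_[p]) ^ 4 ∣ 2 * h 3 + 3 * p * h 4 + 6 * p ^ 2 * h 5 + 10 * p ^ 3 * h 6 := by
    have : 2 * h 3 + 3 * p * h 4 + 6 * p ^ 2 * h 5 + 10 * p ^ 3 * h 6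
        = ∑ k ∈ Finset.Icc 1 (p - 1),
        (x (p - k) ^ 3 + x k ^ 3 + 3 * p * x k ^ 4 + 6 * p ^ 2 * x k ^ 5
          + 10 * p ^ 3 * x k ^ 6) := by
      simp only [Finset.sum_add_distrib, ← Finset.mul_sum, ← hh, ← hrev]
      ring
    rw [this]
    refine Finset.dvd_sum fun k hk => ?_
    have e := e4 k hk
    generalize x k ^ 4 * x (p - k) = w at e
    generalize x (p - k) = y at *
    generalize x k = x at *
    subst e
    generalize (p : ℤ_[p]) = q
    rw [← Ideal.mem_span_singleton, ← Ideal.Quotient.eq_zero_iff_mem]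
    have hq : (Ideal.Quotient.mk (Ideal.span {q ^ 4}) q) ^ 4 = 0 := by
      rw [← map_pow, Ideal.Quotient.eq_zero_iff_mem]
      exact Ideal.mem_span_singleton_self _
    simp only [map_add, map_sub, map_mul, map_pow, map_neg, map_ofNat]
    grind
  have r5 : (p : ℤ_[p]) ^ 2 ∣ 2 * h 5 + 5 * p * h 6 := by
    have : 2 * h 5 + 5 * p * h 6 = ∑ k ∈ Finset.Icc 1 (p - 1),
        (x (p - k) ^ 5 + x k ^ 5 + 5 * p * x k ^ 6) := by
      simp only [Finset.sum_add_distrib, ← Finset.mul_sum, ← hh, ← hrev]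
      ring
    rw [this]
    refine Finset.dvd_sum fun k hk => ?_
    have e : ∃ w, x (p - k) = - x k - p * x k ^ 2 + p ^ 2 * w :=
      ⟨x k ^ 2 * x (p - k), by linear_combination (1 + p * x k) * hxy k hk⟩
    obtain ⟨w, e⟩ := e
    generalize x (p - k) = y at *
    generalize x k = x at *
    subst e
    generalize (p : ℤ_[p]) = q
    rw [← Ideal.mem_span_singleton, ← Ideal.Quotient.eq_zero_iff_mem]
    have hq : (Ideal.Quotient.mk (Ideal.span {q ^ 2}) q) ^ 2 = 0 := by
      rw [← map_pow, Ideal.Quotient.eq_zero_iff_mem]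
      exact Ideal.mem_span_singleton_self _
    simp only [map_add, map_sub, map_mul, map_pow, map_neg, map_ofNat]
    grind
  have h2u : IsUnit (2 : ℤ_[p]) := by
    have : ‖((2 : ℕ) : ℤ_[p])‖ = 1 := by
      rw [PadicInt.norm_natCast_eq_one_iff, Nat.coprime_primes hp Nat.prime_two]
      omega
    rw [PadicInt.isUnit_iff]
    simpa using this
  obtain ⟨v, hv⟩ := h2u.exists_right_inv
  obtain ⟨a2, ha2⟩ := hd 2 (by omega) (by omega)
  obtain ⟨a3, ha3⟩ := hd 3 (by omega) (by omega)
  obtain ⟨a4, ha4⟩ := hd 4 (by omega) (by omega)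
  obtain ⟨a6, ha6⟩ := hd 6 (by omega) (by omega)
  obtain ⟨c1, r1⟩ := r1
  obtain ⟨c3, r3⟩ := r3
  obtain ⟨c5, r5⟩ := r5
  have h5 : h 5 = p ^ 2 * (v * (c5 - 5 * a6)) := by
    rw [ha6] at r5
    linear_combination v * r5 - h 5 * hv
  have h3 : h 3 = v * (- 3 * p * h 4) + p ^ 4 * (v * (c3 - 6 * (v * (c5 - 5 * a6)) - 10 * a6)) := by
    rw [ha6, h5] at r3
    linear_combination v * r3 - h 3 * hv
  obtain ⟨b3, hb3⟩ : ∃ b3, h 3 = p ^ 2 * b3 :=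
    ⟨v * (- 3 * a4) + p ^ 2 * (v * (c3 - 6 * (v * (c5 - 5 * a6)) - 10 * a6)), by
      rw [h3, ha4]; ring⟩
  have h1 : h 1 = v * (- p * h 2) + p ^ 4 * (v * (c1 - b3 - a4)) := by
    rw [hb3, ha4] at r1
    linear_combination v * r1 - h 1 * hv
  rw [h1, h3]
  refine ⟨3 * (v * (c1 - b3 - a4)) * a4
    - a2 * (v * (c3 - 6 * (v * (c5 - 5 * a6)) - 10 * a6)), ?_⟩
  rw [ha4, ha2]
  ring

/-- There exists `N` such that for every prime `p ≥ N`, the `p`-adic valuation of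
`3 H_{p-1}(1,4) − H_{p-1}(2,3) − H_{p-1}(3,2) + 3 H_{p-1}(4,1) + 2 H_{p-1}(5)`
is at least `5`. -/
theorem homogeneous_weighted_congruence_weight_five :
    ∃ N : ℕ, ∀ p : ℕ, (hp : p.Prime) → N ≤ p →
      haveI : Fact p.Prime := ⟨hp⟩
      ‖((3 * MHS (p - 1) [1, 4] - MHS (p - 1) [2, 3] - MHS (p - 1) [3, 2]
          + 3 * MHS (p - 1) [4, 1] + 2 * MHS (p - 1) [5] : ℚ) : ℚ_[p])‖
        ≤ (p : ℝ) ^ (-5 : ℤ) := by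
  refine ⟨11, fun p hp hp11 => ?_⟩
  haveI : Fact p.Prime := ⟨hp⟩
  have hex : ∀ k : ℕ, ∃ y : ℤ_[p], k ∈ Finset.Icc 1 (p - 1) → (k : ℤ_[p]) * y = 1 := by
    intro k
    by_cases hk : k ∈ Finset.Icc 1 (p - 1)
    · have hu : IsUnit (k : ℤ_[p]) := by
        rw [PadicInt.isUnit_iff, PadicInt.norm_natCast_eq_one_iff, hp.coprime_iff_not_dvd]
        rw [Finset.mem_Icc] at hk
        exact fun h => by have := Nat.le_of_dvd (by omega) h; omega
      obtain ⟨y, hy⟩ := hu.exists_right_inv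
      exact ⟨y, fun _ => hy⟩
    · exact ⟨0, fun h => absurd h hk⟩
  choose x hx using hex
  have hk := key p hp11 x hx (fun s => ∑ k ∈ Finset.Icc 1 (p - 1), x k ^ s) (fun s => rfl)
  have hM : ∀ s, ((MHS (p - 1) [s] : ℚ) : ℚ_[p])
      = ((∑ k ∈ Finset.Icc 1 (p - 1), x k ^ s : ℤ_[p]) : ℚ_[p]) := by
    intro s
    rw [mhs_one]
    rw [Rat.cast_sum, PadicInt.coe_sum]
    refine Finset.sum_congr rfl fun k hk => ?_
    push_cast
    have := congrArg (fun z : ℤ_[p] => (z : ℚ_[p])) (hx k hk)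
    push_cast at this
    rw [one_div, ← inv_pow, eq_inv_of_mul_eq_one_right this]
  have s1 := mhs_stuffle (p - 1) 1 4
  have s2 := mhs_stuffle (p - 1) 2 3
  norm_num at s1 s2
  have : (3 * MHS (p - 1) [1, 4] - MHS (p - 1) [2, 3] - MHS (p - 1) [3, 2]
          + 3 * MHS (p - 1) [4, 1] + 2 * MHS (p - 1) [5] : ℚ)
      = 3 * MHS (p - 1) [1] * MHS (p - 1) [4] - MHS (p - 1) [2] * MHS (p - 1) [3] := by
    linear_combination 3 * s1 - s2
  rw [this]
  have h5 := (PadicInt.norm_le_pow_iff_mem_span_pow _ 5).2 (Ideal.mem_span_singleton.2 hk)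
  rw [PadicInt.norm_def] at h5
  have e : ((3 * MHS (p - 1) [1] * MHS (p - 1) [4] - MHS (p - 1) [2] * MHS (p - 1) [3] : ℚ)
      : ℚ_[p]) = ((3 * (∑ k ∈ Finset.Icc 1 (p - 1), x k ^ 1)
        * (∑ k ∈ Finset.Icc 1 (p - 1), x k ^ 4) - (∑ k ∈ Finset.Icc 1 (p - 1), x k ^ 2)
        * (∑ k ∈ Finset.Icc 1 (p - 1), x k ^ 3) : ℤ_[p]) : ℚ_[p]) := by
    rw [PadicInt.coe_sub, PadicInt.coe_mul, PadicInt.coe_mul, PadicInt.coe_mul,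
      ← hM, ← hM, ← hM, ← hM]
    push_cast
    rfl
  rw [e]
  exact_mod_cast h5
end

section
/- Let α be a ℚ-valued function on the set of compositions, and suppose there is a positive integer k such that for every composition 𝐬 the denominator of α(𝐬) is k-th power free (no prime q satisfies q^k ∣ denominator of α(𝐬)). Then: (i) for every prime p, the family 𝐬 ↦ α(𝐬) · p^{w(𝐬)} · H_{p−1}(𝐬), indexed by all compositions, is summable in ℚ_p, with sum a_p; (ii) for all but finitely many primes p, a_p ∈ ℤ_p; and (iii) for every positive integer n, for all but finitely many primes p, a_p − ∑_{𝐬 : w(𝐬) < n} α(𝐬) · p^{w(𝐬)} · H_{p−1}(𝐬) ∈ p^n ℤ_p. -/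
/-- The weight `w(𝐬) = s₁ + ⋯ + s_k` of a composition, a composition being a finite (possibly
empty) list of positive integers. -/
def compWeight (s : List ℕ+) : ℕ := (s.map fun i => (i : ℕ)).sum

/-- The weighted term `α(𝐬) p^{w(𝐬)} H_{p−1}(𝐬)`, viewed in `ℚ_p`. -/
noncomputable def weightedTerm (α : List ℕ+ → ℚ) (p : ℕ) [Fact p.Prime] (s : List ℕ+) : ℚ_[p] :=
  ((α s : ℚ) : ℚ_[p]) * (p : ℚ_[p]) ^ compWeight s *
    ((MHS (p - 1) (s.map fun i => (i : ℕ)) : ℚ) : ℚ_[p])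

theorem finite_weight_lt (N : ℕ) : {s : List ℕ+ | compWeight s < N}.Finite := by
  induction N with
  | zero => simp
  | succ N ih =>
    have h1 : {i : ℕ+ | (i : ℕ) ≤ N}.Finite :=
      Set.Finite.preimage (PNat.coe_injective.injOn) (Set.finite_Iic N)
    refine ((Set.finite_singleton []).union (h1.image2 List.cons ih)).subset ?_
    intro s hs
    cases s with
    | nil => left; rfl
    | cons a t =>
      right
      have ha := a.pos
      have hw : compWeight (a :: t) = (a : ℕ) + compWeight t := by
        simp [compWeight]
      have hs' : compWeight (a :: t) < N + 1 := hs
      refine ⟨a, ?_, t, ?_, rfl⟩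
      · change (a : ℕ) ≤ N; omega
      · change compWeight t < N; omega

theorem norm_MHS_le (p : ℕ) [hp : Fact p.Prime] (t : List ℕ) :
    ∀ n, n < p → ‖((MHS n t : ℚ) : ℚ_[p])‖ ≤ 1 := by
  induction t with
  | nil => intro n _; simp [MHS]
  | cons a t ih =>
    intro n hn
    rw [MHS, Rat.cast_sum]
    refine IsUltrametricDist.norm_sum_le_of_forall_le_of_nonneg zero_le_one ?_
    intro m hm
    rw [Finset.mem_Icc] at hm
    have h1 : ‖(m : ℚ_[p])‖ = 1 := by
      rw [Padic.norm_natCast_eq_one_iff]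
      exact (hp.out.coprime_iff_not_dvd.2 fun hd => absurd (Nat.le_of_dvd (by omega) hd) (by omega))
    have h2 := ih (m - 1) (by omega)
    push_cast
    rw [norm_mul, norm_div, norm_pow, h1]
    simpa using h2

theorem norm_rat_le_pow (p : ℕ) [hp : Fact p.Prime] (k : ℕ) (q : ℚ) (h : ¬ p ^ k ∣ q.den) :
    ‖(q : ℚ_[p])‖ ≤ (p : ℝ) ^ k := by
  have hp0 : (0 : ℝ) < p := by exact_mod_cast hp.out.pos
  have h1 : (p : ℝ) ^ (-k : ℤ) < ‖((q.den : ℤ) : ℚ_[p])‖ := by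
    rw [← not_le, Padic.norm_int_le_pow_iff_dvd]
    exact_mod_cast h
  have h2 := Padic.norm_int_le_one (p := p) q.num
  have h3 : (q : ℚ_[p]) = (q.num : ℚ_[p]) / ((q.den : ℤ) : ℚ_[p]) := by
    rw [Rat.cast_def]; simp
  rw [h3, norm_div, div_le_iff₀ (lt_trans (by positivity) h1)]
  refine h2.trans ?_
  rw [zpow_neg, zpow_natCast] at h1
  calc (1 : ℝ) = (p : ℝ) ^ k * ((p : ℝ) ^ k)⁻¹ := by field_simp
    _ ≤ _ := by gcongr

theorem norm_term_le (α : List ℕ+ → ℚ) (p : ℕ) [hp : Fact p.Prime] (s : List ℕ+) :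
    ‖weightedTerm α p s‖ ≤ ‖(α s : ℚ_[p])‖ * (p : ℝ) ^ (-(compWeight s : ℤ)) := by
  rw [weightedTerm, norm_mul, norm_mul, Padic.norm_p_pow]
  refine mul_le_of_le_one_right (by positivity) ?_
  exact norm_MHS_le p _ _ (Nat.sub_lt hp.out.pos one_pos)

theorem norm_term_le' (α : List ℕ+ → ℚ) (k : ℕ)
    (hden : ∀ s : List ℕ+, ∀ q : ℕ, q.Prime → ¬ q ^ k ∣ (α s).den)
    (p : ℕ) [hp : Fact p.Prime] (m : ℕ) (s : List ℕ+) (h : m + k ≤ compWeight s) :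
    ‖weightedTerm α p s‖ ≤ (p : ℝ) ^ (-(m : ℤ)) := by
  have hp1 : (1 : ℝ) ≤ p := by exact_mod_cast hp.out.one_le
  have hp0 : (p : ℝ) ≠ 0 := by positivity
  calc _ ≤ ‖(α s : ℚ_[p])‖ * (p : ℝ) ^ (-(compWeight s : ℤ)) := norm_term_le α p s
    _ ≤ (p : ℝ) ^ k * (p : ℝ) ^ (-(compWeight s : ℤ)) := by
        gcongr
        exact norm_rat_le_pow p k _ (hden s p hp.out)
    _ = (p : ℝ) ^ ((k : ℤ) + -(compWeight s : ℤ)) := by rw [zpow_add₀ hp0, zpow_natCast]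
    _ ≤ _ := zpow_le_zpow_right₀ hp1 (by omega)

theorem summable_term (α : List ℕ+ → ℚ) (k : ℕ)
    (hden : ∀ s : List ℕ+, ∀ q : ℕ, q.Prime → ¬ q ^ k ∣ (α s).den)
    (p : ℕ) [hp : Fact p.Prime] : Summable (weightedTerm α p) := by
  refine NonarchimedeanAddGroup.summable_of_tendsto_cofinite_zero ?_
  rw [Metric.tendsto_nhds]
  intro ε hε
  have hp1 : (1 : ℝ) < p := by exact_mod_cast hp.out.one_lt
  obtain ⟨m, hm⟩ := exists_pow_lt_of_lt_one hε (inv_lt_one_of_one_lt₀ hp1)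
  rw [Filter.eventually_cofinite]
  refine (finite_weight_lt (m + k)).subset ?_
  intro s hs
  by_contra hc
  simp only [Set.mem_setOf_eq, not_lt] at hc
  apply hs
  rw [dist_zero_right]
  refine (norm_term_le' α k hden p m s hc).trans_lt ?_
  rwa [zpow_neg, zpow_natCast, ← inv_pow]

theorem norm_tsum_le_aux (p : ℕ) [hp : Fact p.Prime] (f : List ℕ+ → ℚ_[p]) (hf : Summable f)
    (C : ℝ) (hC : 0 ≤ C) (h : ∀ s, ‖f s‖ ≤ C) : ‖∑' s, f s‖ ≤ C :=
  le_of_tendsto hf.hasSum.norm (Filter.Eventually.of_forall fun _ =>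
    IsUltrametricDist.norm_sum_le_of_forall_le_of_nonneg hC fun i _ => h i)

theorem main_aux (α : List ℕ+ → ℚ) (k : ℕ)
    (hden : ∀ s : List ℕ+, ∀ q : ℕ, q.Prime → ¬ q ^ k ∣ (α s).den) (n : ℕ) :
    {p : ℕ | ∃ hp : p.Prime,
        haveI : Fact p.Prime := ⟨hp⟩
        ¬ ‖(∑' s : List ℕ+, weightedTerm α p s) -
              ∑' s : List ℕ+, (if compWeight s < n then weightedTerm α p s else 0)‖
            ≤ (p : ℝ) ^ (-(n : ℤ))}.Finite := by
  have hfin : (⋃ s ∈ {s : List ℕ+ | compWeight s < n + k}, {p : ℕ | p ∣ (α s).den}).Finite := by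
    refine (finite_weight_lt (n + k)).biUnion fun s _ => ?_
    refine (Set.finite_Iic (α s).den).subset fun p hp => Nat.le_of_dvd (α s).den_pos hp
  refine hfin.subset ?_
  rintro p ⟨hp, hn⟩
  haveI : Fact p.Prime := ⟨hp⟩
  by_contra hc
  simp only [Set.mem_iUnion, Set.mem_setOf_eq, not_exists] at hc
  apply hn
  have hp1 : (1 : ℝ) ≤ p := by exact_mod_cast hp.one_le
  have hs := summable_term α k hden p
  have hs2 : Summable (fun s => if compWeight s < n then weightedTerm α p s else 0) := by
    refine summable_of_finite_support ((finite_weight_lt n).subset ?_)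
    intro s h
    by_contra h'
    exact h (if_neg h')
  rw [← hs.tsum_sub hs2]
  refine norm_tsum_le_aux p _ (hs.sub hs2) _ (by positivity) ?_
  intro s
  by_cases h1 : compWeight s < n
  · simp only [h1, if_true, sub_self, norm_zero]; positivity
  simp only [h1, if_false, sub_zero]
  by_cases h2 : compWeight s < n + k
  · refine (norm_term_le α p s).trans ?_
    calc _ ≤ 1 * (p : ℝ) ^ (-(compWeight s : ℤ)) := by
          gcongr
          exact Padic.norm_rat_le_one (hc s h2)
      _ ≤ _ := by
          rw [one_mul]
          exact zpow_le_zpow_right₀ hp1 (by omega)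
  · exact norm_term_le' α k hden p n s (by omega)

/-- Let `α` be a `ℚ`-valued function on compositions, and suppose there is a positive integer `k`
such that the denominator of each `α(𝐬)` is `k`-th power free.  Then:
(i) for every prime `p`, the family `𝐬 ↦ α(𝐬) p^{w(𝐬)} H_{p−1}(𝐬)` is summable in `ℚ_p`;
(ii) for all but finitely many primes `p`, its sum `a_p` lies in `ℤ_p` (i.e. `‖a_p‖ ≤ 1`);
(iii) for every positive integer `n`, for all but finitely many primes `p`,
`a_p − ∑_{w(𝐬)<n} α(𝐬) p^{w(𝐬)} H_{p−1}(𝐬) ∈ p^n ℤ_p`. -/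
theorem weighted_mhs_summable (α : List ℕ+ → ℚ) (k : ℕ) (hk : 0 < k)
    (hden : ∀ s : List ℕ+, ∀ q : ℕ, q.Prime → ¬ q ^ k ∣ (α s).den) :
    (∀ (p : ℕ) [Fact p.Prime], Summable (weightedTerm α p)) ∧
    {p : ℕ | ∃ hp : p.Prime,
      haveI : Fact p.Prime := ⟨hp⟩
      ¬ ‖∑' s : List ℕ+, weightedTerm α p s‖ ≤ 1}.Finite ∧
    (∀ n : ℕ, 0 < n →
      {p : ℕ | ∃ hp : p.Prime,
        haveI : Fact p.Prime := ⟨hp⟩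
        ¬ ‖(∑' s : List ℕ+, weightedTerm α p s) -
              ∑' s : List ℕ+, (if compWeight s < n then weightedTerm α p s else 0)‖
            ≤ (p : ℝ) ^ (-(n : ℤ))}.Finite) := by
  refine ⟨fun p _ => summable_term α k hden p, ?_, fun n _ => main_aux α k hden n⟩
  simpa using main_aux α k hden 0
end

section
/- Let p be an odd prime and let k ≥ r ≥ 0 be natural numbers. Then the following identity holds in ℚ: C(kp, rp) = C(k, r) · ∏_{j=1, p ∤ j}^{rp−1} (1 − kp/j), where the product is over the integers j with 1 ≤ j ≤ rp−1 not divisible by p. -/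
theorem choose_succ_prod_aux (n m : ℕ) :
    (n.choose (m + 1) : ℚ) =
      (n : ℚ) / ((m : ℚ) + 1) * ∏ j ∈ Finset.Icc 1 m, (-(1 - (n : ℚ) / (j : ℚ))) := by
  induction m with
  | zero => simp
  | succ m ih =>
    have h : (n.choose (m + 1 + 1) : ℚ) * ((m : ℚ) + 1 + 1)
        = (n.choose (m + 1) : ℚ) * ((n : ℚ) - ((m : ℚ) + 1)) := by
      rcases le_or_gt (m + 1) n with hle | hlt
      · have := Nat.choose_succ_right_eq n (m + 1)
        have h2 : (n.choose (m + 1 + 1) : ℚ) * ((m + 1 + 1 : ℕ) : ℚ)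
          = (n.choose (m + 1) : ℚ) * ((n - (m + 1) : ℕ) : ℚ) := by exact_mod_cast this
        rw [Nat.cast_sub hle] at h2
        push_cast at h2
        exact h2
      · rw [Nat.choose_eq_zero_of_lt hlt, Nat.choose_eq_zero_of_lt (by omega)]
        simp
    have h1 : (m : ℚ) + 1 ≠ 0 := by positivity
    have h2 : (m : ℚ) + 1 + 1 ≠ 0 := by positivity
    rw [Finset.prod_Icc_succ_top (by omega)]
    rw [ih] at h
    push_cast
    rw [← mul_left_inj' h2, h]
    field_simp
    ring

/-- For an odd prime `p` and natural numbers `k ≥ r ≥ 0`,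
`C(kp, rp) = C(k, r) ∏_{j=1, p∤j}^{rp−1} (1 − kp/j)` in `ℚ`. -/
theorem choose_mul_prime_eq_choose_mul_prod (p : ℕ) (hp : p.Prime) (hodd : Odd p)
    (k r : ℕ) (hkr : r ≤ k) :
    ((k * p).choose (r * p) : ℚ) =
      (k.choose r : ℚ) *
        ∏ j ∈ (Finset.Icc 1 (r * p - 1)).filter fun j => ¬ p ∣ j,
          (1 - (k : ℚ) * (p : ℚ) / (j : ℚ)) := by
  rcases r with _ | s
  · simp
  have hp0 : 0 < p := hp.pos
  have hpq : (p : ℚ) ≠ 0 := by exact_mod_cast hp0.ne'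
  obtain ⟨m, hm⟩ : ∃ m, (s + 1) * p = m + 1 :=
    ⟨(s + 1) * p - 1, by have : 0 < (s + 1) * p := by positivity
                         omega⟩
  have hmq : ((s : ℚ) + 1) * p = (m : ℚ) + 1 := by exact_mod_cast hm
  have himg : (Finset.Icc 1 m).filter (fun j => p ∣ j) = (Finset.Icc 1 s).image (fun i => i * p) := by
    ext j
    simp only [Finset.mem_filter, Finset.mem_Icc, Finset.mem_image]
    constructor
    · rintro ⟨⟨h1, h2⟩, c, rfl⟩
      refine ⟨c, ⟨?_, ?_⟩, mul_comm _ _⟩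
      · exact Nat.pos_of_ne_zero (by rintro rfl; simp at h1)
      · have : c * p < (s + 1) * p := by rw [hm, mul_comm]; omega
        have := Nat.lt_of_mul_lt_mul_right this
        omega
    · rintro ⟨i, ⟨h1, h2⟩, rfl⟩
      refine ⟨⟨Nat.mul_pos h1 hp0, ?_⟩, Dvd.intro_left i rfl⟩
      have : i * p < (s + 1) * p := Nat.mul_lt_mul_of_pos_right (by omega) hp0
      omega
  have hinj : Function.Injective (fun i : ℕ => i * p) :=
    fun a b h => Nat.eq_of_mul_eq_mul_right hp0 h
  have hcard := Finset.card_filter_add_card_filter_not (s := Finset.Icc 1 m) (fun j => p ∣ j)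
  rw [himg, Finset.card_image_of_injective _ hinj] at hcard
  simp only [Nat.card_Icc, Nat.add_sub_cancel] at hcard
  have heven : Even ((Finset.Icc 1 m).filter (fun j => ¬ p ∣ j)).card := by
    obtain ⟨t, rfl⟩ := hodd
    refine ⟨(s + 1) * t, ?_⟩
    nlinarith
  have hprod := Finset.prod_filter_mul_prod_filter_not (Finset.Icc 1 m) (fun j => p ∣ j)
    (fun j => (-(1 - ((k * p : ℕ) : ℚ) / (j : ℚ))))
  rw [himg, Finset.prod_image (fun a _ b _ h => hinj h), Finset.prod_neg (s := Finset.filter _ _),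
    heven.neg_one_pow, one_mul] at hprod
  have hsub : (s + 1) * p - 1 = m := by omega
  rw [hsub, hm, choose_succ_prod_aux, choose_succ_prod_aux, ← hprod, ← hmq]
  have : ∀ i ∈ Finset.Icc 1 s, (-(1 - ((k * p : ℕ) : ℚ) / ((i * p : ℕ) : ℚ)))
      = (-(1 - (k : ℚ) / (i : ℚ))) := by
    intro i _
    push_cast
    rw [mul_div_mul_right _ _ hpq]
  rw [Finset.prod_congr rfl this]
  push_cast
  rw [mul_div_mul_right _ _ hpq, mul_assoc]
end

section
/- Let p be an odd prime and let k ≥ r ≥ 0 be natural numbers. Then the following identity holds in ℚ: C(kp, rp) = C(k, r) · ∑_{n=0}^{r(p−1)} (−kp)^n · H^{(p)}_{rp}({1}^n), where H^{(p)}_{m}({1}^n) = ∑_{m ≥ n₁ > n₂ > ⋯ > n_n ≥ 1, p ∤ n_i for all i} 1/(n₁ n₂ ⋯ n_n) is the p-restricted multiple harmonic sum (with H^{(p)}_m({1}^0) = 1). -/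
/-- The `p`-restricted multiple harmonic sum
`H^{(p)}_n(s₁,…,s_k) = ∑_{n ≥ n₁ > … > n_k ≥ 1, p ∤ nᵢ} 1/(n₁^{s₁} ⋯ n_k^{s_k})`,
with `H^{(p)}_n(∅) = 1`. -/
def MHSres (p : ℕ) : ℕ → List ℕ → ℚ
  | _, [] => 1
  | n, s :: t =>
      ∑ m ∈ (Finset.Icc 1 n).filter fun m => ¬ p ∣ m, (1 / (m : ℚ) ^ s) * MHSres p (m - 1) t

lemma MHSres_zero_cons (p s : ℕ) (t : List ℕ) : MHSres p 0 (s :: t) = 0 := by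
  simp [MHSres]

lemma MHSres_succ_cons (p m s : ℕ) (t : List ℕ) :
    MHSres p (m + 1) (s :: t) = MHSres p m (s :: t) +
      (if p ∣ m + 1 then 0 else 1 / ((m + 1 : ℕ) : ℚ) ^ s * MHSres p m t) := by
  simp only [MHSres, Finset.sum_filter]
  rw [Finset.sum_Icc_succ_top (by omega)]
  simp only [ite_not, Nat.add_sub_cancel]

lemma MHSres_gen (p : ℕ) (x : ℚ) (m : ℕ) : ∀ N : ℕ,
    (∑ j ∈ Finset.range m, if p ∣ j + 1 then 0 else 1) < N →
    ∑ n ∈ Finset.range N, x ^ n * MHSres p m (List.replicate n 1) =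
      ∏ j ∈ Finset.range m, if p ∣ j + 1 then 1 else (1 + x / ((j + 1 : ℕ) : ℚ)) := by
  induction m with
  | zero =>
    intro N hN
    obtain ⟨N, rfl⟩ : ∃ M, N = M + 1 := ⟨N - 1, by omega⟩
    rw [Finset.sum_range_succ']
    simp [List.replicate_succ, MHSres_zero_cons, MHSres]
  | succ m ih =>
    intro N hN
    rw [Finset.sum_range_succ] at hN
    obtain ⟨N, rfl⟩ : ∃ M, N = M + 1 := ⟨N - 1, by omega⟩
    rw [Finset.prod_range_succ]
    by_cases h : p ∣ m + 1
    · simp only [h, if_true] at hN ⊢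
      rw [mul_one, ← ih (N + 1) (by omega)]
      apply Finset.sum_congr rfl
      intro n _
      cases n with
      | zero => simp [MHSres]
      | succ n => simp [List.replicate_succ, MHSres_succ_cons, h]
    · simp only [h, if_false] at hN ⊢
      rw [mul_add, mul_one]
      nth_rewrite 1 [← ih (N + 1) (by omega)]
      rw [← ih N (by omega), Finset.sum_range_succ', Finset.sum_range_succ', Finset.sum_mul]
      simp only [List.replicate_succ, MHSres_succ_cons, h, if_false, mul_add,
        Finset.sum_add_distrib]
      have : ∑ n ∈ Finset.range N, x ^ (n + 1) * (1 / ((m + 1 : ℕ) : ℚ) ^ 1 *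
          MHSres p m (List.replicate n 1)) =
          ∑ n ∈ Finset.range N, x ^ n * MHSres p m (List.replicate n 1) *
            (x / ((m + 1 : ℕ) : ℚ)) := by
        apply Finset.sum_congr rfl
        intro n _
        ring
      rw [this]
      simp [MHSres]
      ring

lemma not_dvd_block (q r i : ℕ) (hi : i < q) : ¬ (q + 1) ∣ r * (q + 1) + i + 1 := by
  intro h
  rw [add_assoc, Nat.dvd_add_right (Dvd.intro_left r rfl)] at h
  have := Nat.le_of_dvd (by omega) h
  omega

lemma dvd_block (q r : ℕ) : (q + 1) ∣ r * (q + 1) + q + 1 :=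
  ⟨r + 1, by ring⟩

lemma count_block (q r : ℕ) :
    (∑ j ∈ Finset.range (r * (q + 1)), if (q + 1) ∣ j + 1 then 0 else 1) = r * q := by
  induction r with
  | zero => simp
  | succ r ih =>
    rw [show (r + 1) * (q + 1) = r * (q + 1) + (q + 1) by ring, Finset.sum_range_add, ih,
      Finset.sum_range_succ, if_pos (dvd_block q r),
      Finset.sum_congr rfl (fun i hi => if_neg (not_dvd_block q r i (Finset.mem_range.1 hi)))]
    simp
    ring

lemma choose_prod (N M : ℕ) (h : M ≤ N) :
    (N.choose M : ℚ) = ∏ j ∈ Finset.range M, ((N : ℚ) - j) / ((j : ℚ) + 1) := by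
  induction M with
  | zero => simp
  | succ M ih =>
    rw [Finset.prod_range_succ, ← ih (by omega), mul_div_assoc', eq_div_iff (by positivity)]
    have := Nat.choose_succ_right_eq N M
    have h2 : ((N - M : ℕ) : ℚ) = N - M := by push_cast [Nat.cast_sub (by omega : M ≤ N)]; rfl
    rw [← h2]
    exact_mod_cast this

lemma prod_block (q k : ℕ) (hq : Even q) (r : ℕ) :
    ∏ j ∈ Finset.range (r * (q + 1)), (((k * (q + 1) : ℕ) : ℚ) - j) / ((j : ℚ) + 1) =
    (∏ j ∈ Finset.range r, ((k : ℚ) - j) / ((j : ℚ) + 1)) *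
      ∏ j ∈ Finset.range (r * (q + 1)), if (q + 1) ∣ j + 1 then 1 else
        (1 + (-((k : ℚ) * ((q + 1 : ℕ) : ℚ))) / ((j + 1 : ℕ) : ℚ)) := by
  induction r with
  | zero => simp
  | succ r ih =>
    rw [show (r + 1) * (q + 1) = r * (q + 1) + (q + 1) by ring, Finset.prod_range_add, ih]
    have key : ∏ x ∈ Finset.range (q + 1), (((k * (q + 1) : ℕ) : ℚ) - ((r * (q + 1) + x : ℕ) : ℚ)) /
          (((r * (q + 1) + x : ℕ) : ℚ) + 1) = ((k : ℚ) - r) / ((r : ℚ) + 1) *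
        ∏ i ∈ Finset.range q, (1 + (-((k : ℚ) * ((q + 1 : ℕ) : ℚ))) /
          ((r * (q + 1) + i + 1 : ℕ) : ℚ)) := by
      have e : ∏ i ∈ Finset.range q, (1 + (-((k : ℚ) * ((q + 1 : ℕ) : ℚ))) /
          ((r * (q + 1) + i + 1 : ℕ) : ℚ)) =
          ∏ i ∈ Finset.range q, ((((k * (q + 1) : ℕ) : ℚ) - ((r * (q + 1) + (i + 1) : ℕ) : ℚ)) /
          (((r * (q + 1) + i : ℕ) : ℚ) + 1)) := by
        have h0 : ∀ f : ℕ → ℚ, ∏ i ∈ Finset.range q, f i = ∏ i ∈ Finset.range q, -1 * f i := by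
          intro f
          rw [Finset.prod_mul_distrib]
          simp [hq.neg_one_pow]
        rw [h0]
        apply Finset.prod_congr rfl
        intro i _
        push_cast
        have : (r : ℚ) * (q + 1) + i + 1 ≠ 0 := by positivity
        field_simp
        ring
      rw [e, Finset.prod_div_distrib, Finset.prod_div_distrib, Finset.prod_range_succ',
        Finset.prod_range_succ (fun x : ℕ => ((r * (q + 1) + x : ℕ) : ℚ) + 1)]
      rw [mul_comm (∏ i ∈ Finset.range q, (((r * (q + 1) + i : ℕ) : ℚ) + 1)), mul_comm (∏ i ∈ Finset.range q, (((k * (q + 1) : ℕ) : ℚ) - _)), mul_div_mul_comm]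
      congr 1
      push_cast
      have h1 : (r : ℚ) * (q + 1) + q + 1 ≠ 0 := by positivity
      have h2 : (r : ℚ) + 1 ≠ 0 := by positivity
      rw [div_eq_div_iff h1 h2]
      ring
    rw [key, Finset.prod_range_succ _ r, Finset.prod_range_add]
    rw [Finset.prod_range_succ _ q, if_pos (dvd_block q r),
      Finset.prod_congr rfl (fun i hi => if_neg (not_dvd_block q r i (Finset.mem_range.1 hi)))]
    ring

/-- For an odd prime `p` and natural numbers `k ≥ r ≥ 0`,
`C(kp, rp) = C(k, r) ∑_{n=0}^{r(p−1)} (−kp)^n H^{(p)}_{rp}({1}^n)` in `ℚ`. -/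
theorem choose_mul_prime_eq_choose_mul_restricted_mhs_sum (p : ℕ) (hp : p.Prime) (hodd : Odd p)
    (k r : ℕ) (hkr : r ≤ k) :
    ((k * p).choose (r * p) : ℚ) =
      (k.choose r : ℚ) *
        ∑ n ∈ Finset.range (r * (p - 1) + 1),
          (-((k : ℚ) * (p : ℚ))) ^ n * MHSres p (r * p) (List.replicate n 1) := by
  obtain ⟨q, rfl⟩ : ∃ q, p = q + 1 := ⟨p - 1, by have := hp.pos; omega⟩
  have hq : Even q := by
    rcases Nat.even_or_odd q with h | h
    · exact h
    · exact absurd (h.add_odd odd_one) (Nat.not_even_iff_odd.2 hodd)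
  rw [MHSres_gen _ _ _ _ (by rw [count_block]; simp), choose_prod _ _ hkr,
    choose_prod _ _ (Nat.mul_le_mul_right _ hkr), prod_block q k hq r]
end

section
/- In the quotient ring 𝒜 = (∏_p ℤ/(p)) / (⊕_p ℤ/(p)), where the product and direct sum are taken over all primes p, the image of every nonzero integer m (under the diagonal map sending m to the class of the family (m mod p)_p) is a unit. Consequently 𝒜 is an algebra over ℚ. -/
/-- The ideal `⊕_p ℤ/(p)` of finitely supported families inside the product ring
`∏_p ℤ/(p)`, the product being over all primes `p`. -/
def directSumIdeal : Ideal (∀ p : Nat.Primes, ZMod p) where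
  carrier := {x | {p : Nat.Primes | x p ≠ 0}.Finite}
  zero_mem' := by
    simp only [Set.mem_setOf_eq, Pi.zero_apply, ne_eq, not_true_eq_false,
      Set.setOf_false, Set.finite_empty]
  add_mem' := by
    intro a b ha hb
    refine (ha.union hb).subset ?_
    intro q hq
    simp only [Set.mem_setOf_eq, Set.mem_union, Pi.add_apply] at *
    by_contra h
    push_neg at h
    rw [h.1, h.2, add_zero] at hq
    exact hq rfl
  smul_mem' := by
    intro c a ha
    refine ha.subset ?_
    intro q hq
    simp only [Set.mem_setOf_eq, smul_eq_mul, Pi.mul_apply] at *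
    intro h
    rw [h, mul_zero] at hq
    exact hq rfl

/-- In the ring `𝒜 = (∏_p ℤ/(p)) / (⊕_p ℤ/(p))`, the image of every nonzero integer `m` under
the diagonal map is a unit; consequently `𝒜` admits the structure of a `ℚ`-algebra. -/
theorem int_diagonal_isUnit_and_rat_algebra :
    (∀ m : ℤ, m ≠ 0 →
      IsUnit (Ideal.Quotient.mk directSumIdeal (fun p : Nat.Primes => (m : ZMod p)))) ∧
    Nonempty (ℚ →+* ((∀ p : Nat.Primes, ZMod p) ⧸ directSumIdeal)) := by
  have key : ∀ m : ℤ, m ≠ 0 →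
      IsUnit (Ideal.Quotient.mk directSumIdeal (fun p : Nat.Primes => (m : ZMod p))) := by
    intro m hm
    refine IsUnit.of_mul_eq_one
      (Ideal.Quotient.mk directSumIdeal (fun p : Nat.Primes => (m : ZMod p)⁻¹)) ?_
    rw [← map_mul, ← map_one (Ideal.Quotient.mk directSumIdeal), Ideal.Quotient.eq]
    change {p : Nat.Primes | (m : ZMod p) * (m : ZMod p)⁻¹ - 1 ≠ 0}.Finite
    refine Set.Finite.subset
      ((Set.finite_le_nat m.natAbs).preimage
        (f := fun p : Nat.Primes => (p : ℕ)) (Subtype.val_injective.injOn)) ?_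
    intro p hp
    haveI : Fact (p : ℕ).Prime := ⟨p.2⟩
    simp only [Set.mem_preimage, Set.mem_setOf_eq] at hp ⊢
    by_cases h : (m : ZMod p) = 0
    · rw [ZMod.intCast_zmod_eq_zero_iff_dvd] at h
      exact Nat.le_of_dvd (Int.natAbs_pos.mpr hm) (Int.natCast_dvd.mp h)
    · exact absurd (by rw [mul_inv_cancel₀ h, sub_self]) hp
  refine ⟨key, ⟨IsLocalization.lift (M := nonZeroDivisors ℤ) (S := ℚ)
    (g := Int.castRingHom ((∀ p : Nat.Primes, ZMod p) ⧸ directSumIdeal)) ?_⟩⟩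
  intro y
  have h := key y (nonZeroDivisors.ne_zero y.2)
  have e : (fun p : Nat.Primes => ((y : ℤ) : ZMod p))
      = ((y : ℤ) : ∀ p : Nat.Primes, ZMod p) := by
    funext p
    simp
  rw [e, map_intCast] at h
  exact h
end
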